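/- arXiv:1001.0436 — 10 statements merged into one kernel-verified Lean document; each statement's English description precedes it below -/
import Mathlib

section
/- Fix numbers of jobs n and machines m and a linear order ≺ on finite sets of job–machine pairs. Let E ⊆ Fin n × Fin m be an edge set, let i be a job, let E'_i be a set of pairs with first coordinate i, and set E' = (E \ E_i) ∪ E'_i. Suppose X is a maximum-cardinality matching contained in E that is ≺-least among all maximum-cardinality matchings contained in E, and X' is a maximum-cardinality matching contained in E' that is ≺-least among all maximum-cardinality matchings contained in E'. Then the number of edges of E_i contained in X is at least the number of edges of E_i contained in X'; in particular, if X' matches job i along an edge of E_i, then X matches job i along an edge of E_i. (This says the mechanism returning the ≺-least maximum matching is truthful for maximum bipartite matching in the private graph model.) -/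
/-- A matching: any two distinct elements differ in both coordinates. -/
def IsMatching {n m : ℕ} (M : Finset (Fin n × Fin m)) : Prop :=
  ∀ e ∈ M, ∀ e' ∈ M, e ≠ e' → e.1 ≠ e'.1 ∧ e.2 ≠ e'.2

/- Suppose `X'` contains an edge of `E` at job `i` while `X` contains none. Then `X` is also a
subset of `E'`, because it avoids the edges that were changed, and `X'` is also a subset of `E`,
because that edge is its only one at `i`. So `X` and `X'` compete in both instances, and asymmetry
of the tie-breaking relation forces `X = X'`, which is absurd. The comparison of cardinalities
follows, since `X'` has at most one edge at `i`. -/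

section LeastOptimal

variable {γ κ : Type*} [PartialOrder κ] {Feasible : Finset γ → Prop} {val : Finset γ → κ}
  {lt : Finset γ → Finset γ → Prop} {E E' X X' : Finset γ}

/-- `X` is the outcome, on the edge set `E`, of the mechanism that maximizes `val` over the feasible
subsets of `E` and breaks ties by `lt`. Maximum matchings are the case where `val` is the
cardinality. -/
structure IsLeastOptimal (Feasible : Finset γ → Prop) (val : Finset γ → κ)
    (lt : Finset γ → Finset γ → Prop) (E X : Finset γ) : Prop where
  feasible : Feasible X
  subset : X ⊆ E
  val_le : ∀ Y, Feasible Y → Y ⊆ E → val Y ≤ val X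
  lt_of_ne : ∀ Y, Feasible Y → Y ⊆ E → val Y = val X → Y ≠ X → lt X Y

theorem IsLeastOptimal.eq_of_subset [Std.Asymm lt] (hX : IsLeastOptimal Feasible val lt E X)
    (hX' : IsLeastOptimal Feasible val lt E' X') (hXE' : X ⊆ E') (hX'E : X' ⊆ E) : X = X' := by
  by_contra hne
  have hval : val X = val X' :=
    (hX'.val_le X hX.feasible hXE').antisymm (hX.val_le X' hX'.feasible hX'E)
  have hlt : lt X X' := hX.lt_of_ne X' hX'.feasible hX'E hval.symm (Ne.symm hne)
  have hgt : lt X' X := hX'.lt_of_ne X hX.feasible hXE' hval hne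
  exact Std.Asymm.asymm X X' hlt hgt

end LeastOptimal

section ChangedJob

variable {γ ι : Type*} {job : γ → ι} {i : ι} {E E' M : Finset γ}

theorem subset_of_forall_ne_mem_iff (hEE' : ∀ e, job e ≠ i → (e ∈ E ↔ e ∈ E')) (hM : M ⊆ E)
    (hi : ∀ e ∈ M, job e = i → e ∈ E') : M ⊆ E' := by
  intro e he
  by_cases hei : job e = i
  · exact hi e he hei
  · exact (hEE' e hei).1 (hM he)

variable [DecidableEq γ] [DecidableEq ι]

theorem mem_iff_mem_sdiff_filter_union {F : Finset γ} (hF : ∀ e ∈ F, job e = i) {e : γ}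
    (he : job e ≠ i) : e ∈ E ↔ e ∈ (E \ E.filter (fun e => job e = i)) ∪ F := by
  have heF : e ∉ F := fun h => he (hF e h)
  simp [he, heF]

theorem card_inter_filter_le_one_of_injOn (hM : Set.InjOn job M) :
    (M ∩ E.filter (fun e => job e = i)).card ≤ 1 := by
  rw [Finset.card_le_one]
  intro a ha b hb
  simp only [Finset.mem_inter, Finset.mem_filter] at ha hb
  exact hM ha.1 hb.1 (ha.2.2.trans hb.2.2.symm)

variable {κ : Type*} [PartialOrder κ] {Feasible : Finset γ → Prop} {val : Finset γ → κ}
  {lt : Finset γ → Finset γ → Prop} {X X' : Finset γ}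

theorem IsLeastOptimal.inter_filter_nonempty [Std.Asymm lt]
    (hX : IsLeastOptimal Feasible val lt E X) (hX' : IsLeastOptimal Feasible val lt E' X')
    (hEE' : ∀ e, job e ≠ i → (e ∈ E ↔ e ∈ E')) (hinj : Set.InjOn job X')
    (h : (X' ∩ E.filter (fun e => job e = i)).Nonempty) :
    (X ∩ E.filter (fun e => job e = i)).Nonempty := by
  obtain ⟨f, hf⟩ := h
  simp only [Finset.mem_inter, Finset.mem_filter] at hf
  obtain ⟨hfX', hfE, hfi⟩ := hf
  by_contra hempty
  have hXi : ∀ e ∈ X, job e ≠ i := fun e he hei =>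
    hempty ⟨e, Finset.mem_inter.2 ⟨he, Finset.mem_filter.2 ⟨hX.subset he, hei⟩⟩⟩
  have hXE' : X ⊆ E' :=
    subset_of_forall_ne_mem_iff hEE' hX.subset fun e he hei => absurd hei (hXi e he)
  have hX'E : X' ⊆ E :=
    subset_of_forall_ne_mem_iff (fun e hei => (hEE' e hei).symm) hX'.subset fun e he hei =>
      hinj hfX' he (hfi.trans hei.symm) ▸ hfE
  exact hXi f (hX.eq_of_subset hX' hXE' hX'E ▸ hfX') hfi

theorem stmt0_general [Std.Asymm lt]
    (hX : IsLeastOptimal Feasible val lt E X) (hX' : IsLeastOptimal Feasible val lt E' X')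
    (hEE' : ∀ e, job e ≠ i → (e ∈ E ↔ e ∈ E')) (hinj : Set.InjOn job X') :
    (X' ∩ E.filter (fun e => job e = i)).card ≤ (X ∩ E.filter (fun e => job e = i)).card := by
  rcases (X' ∩ E.filter (fun e => job e = i)).eq_empty_or_nonempty with hempty | hne
  · simp [hempty]
  · exact (card_inter_filter_le_one_of_injOn hinj).trans
      (hX.inter_filter_nonempty hX' hEE' hinj hne).card_pos

end ChangedJob

theorem inter_filter_fst_nonempty_iff {α β : Type*} [DecidableEq α] [DecidableEq β]
    {M E : Finset (α × β)} {i : α} :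
    (M ∩ E.filter (fun e => e.1 = i)).Nonempty ↔ ∃ j, (i, j) ∈ M ∧ (i, j) ∈ E := by
  simp [Finset.Nonempty]

theorem IsMatching.injOn_fst {n m : ℕ} {M : Finset (Fin n × Fin m)} (hM : IsMatching M) :
    Set.InjOn Prod.fst (M : Set (Fin n × Fin m)) := by
  intro e he e' he' heq
  by_contra hne
  exact (hM e he e' he' hne).1 heq

/-- Truthfulness of the ≺-least maximum matching mechanism. -/
theorem stmt0 (n m : ℕ)
    (lt : Finset (Fin n × Fin m) → Finset (Fin n × Fin m) → Prop)
    (hlt : IsStrictTotalOrder (Finset (Fin n × Fin m)) lt)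
    (E Ei' X X' : Finset (Fin n × Fin m)) (i : Fin n)
    (hEi' : ∀ e ∈ Ei', e.1 = i)
    (E' : Finset (Fin n × Fin m))
    (hE' : E' = (E \ E.filter (fun e => e.1 = i)) ∪ Ei')
    (hXm : IsMatching X) (hXE : X ⊆ E)
    (hXmax : ∀ Y, IsMatching Y → Y ⊆ E → Y.card ≤ X.card)
    (hXmin : ∀ Y, IsMatching Y → Y ⊆ E → Y.card = X.card → Y ≠ X → lt X Y)
    (hX'm : IsMatching X') (hX'E : X' ⊆ E')
    (hX'max : ∀ Y, IsMatching Y → Y ⊆ E' → Y.card ≤ X'.card)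
    (hX'min : ∀ Y, IsMatching Y → Y ⊆ E' → Y.card = X'.card → Y ≠ X' → lt X' Y) :
    (X' ∩ E.filter (fun e => e.1 = i)).card ≤ (X ∩ E.filter (fun e => e.1 = i)).card
      ∧ ((∃ j, (i, j) ∈ X' ∧ (i, j) ∈ E) → ∃ j, (i, j) ∈ X ∧ (i, j) ∈ E) := by
  have hcard := stmt0_general (val := Finset.card) ⟨hXm, hXE, hXmax, hXmin⟩
    ⟨hX'm, hX'E, hX'max, hX'min⟩ (fun _ he => hE' ▸ mem_iff_mem_sdiff_filter_union hEi' he)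
    hX'm.injOn_fst
  simp only [← inter_filter_fst_nonempty_iff, ← Finset.card_pos]
  exact ⟨hcard, fun hpos => hpos.trans_le hcard⟩
end

section
/- Let A be a randomized mechanism for maximum weight bipartite matching with 2 jobs and 2 machines in the private graph model: A assigns to each value function v : Fin 2 × Fin 2 → ℝ with v ≥ 0 and each edge set E ⊆ Fin 2 × Fin 2 a finitely supported probability distribution A(v,E) over matchings contained in E. Suppose A is truthful in expectation: for every v ≥ 0, every edge set E, every job i, and every set E'_i of pairs with first coordinate i, letting E' = (E \ E_i) ∪ E'_i, one has E_{X ~ A(v,E)}[∑_{e ∈ X ∩ E_i} v(e)] ≥ E_{X ~ A(v,E')}[∑_{e ∈ X ∩ E_i} v(e)]. Then for every real α < 2/(2√2 − 1) there exist v ≥ 0 and an edge set E such that α · E_{X ~ A(v,E)}[∑_{e ∈ X} v(e)] < max over all matchings M ⊆ E of ∑_{e ∈ M} v(e). That is, no truthful-in-expectation randomized mechanism gives better than a 2/(2√2 − 1) ≈ 1.0938 approximation. -/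
/-!
Two jobs may use every machine; all of them value one favourite machine at `1` and every other
machine at `x`. The favourite machine serves only one job, so some job `i` receives it with
probability at most `1 / 2` and hence has expected value at most `(1 + x) / 2`. If `i` hides all its
edges but the favourite one, truthfulness keeps the probability that `i` gets that edge below
`(1 + x) / 2`, and then the expected welfare is at most `1 + x * (1 + x) / 2`, while serving `i` by
its favourite machine and the other job elsewhere yields `1 + x`. The ratio of these two numbers is
largest at `x = √2 - 1`.
-/

variable {n m : ℕ}

/-- The welfare of the edge set `M` under the values `v`. -/
def welfare (v : Fin n × Fin m → ℝ) (M : Finset (Fin n × Fin m)) : ℝ :=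
  ∑ e ∈ M, v e

/-- The part of the welfare of `M` that comes from the edges of job `i`. -/
def jobValue (v : Fin n × Fin m → ℝ) (i : Fin n) (M : Finset (Fin n × Fin m)) : ℝ :=
  ∑ e ∈ M with e.1 = i, v e

/-- The real-valued indicator of the event that the edge `e` is chosen; its expectation is the
probability of that event. -/
def edgeIndicator (e : Fin n × Fin m) (M : Finset (Fin n × Fin m)) : ℝ :=
  if e ∈ M then 1 else 0

/-- The values under which every job values machine `k` at `1` and all other machines at `x`. -/
def favouriteValue (k : Fin m) (x : ℝ) (e : Fin n × Fin m) : ℝ :=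
  if e.2 = k then 1 else x

/-- The graph that joins the jobs `i` and `j` to every machine. -/
def twoJobGraph (i j : Fin n) : Finset (Fin n × Fin m) :=
  {i, j} ×ˢ Finset.univ

/-- The edge set that results from `E` when job `i` reports the edges `S` instead of its own. -/
def misreport (E : Finset (Fin n × Fin m)) (i : Fin n) (S : Finset (Fin n × Fin m)) :
    Finset (Fin n × Fin m) :=
  (E \ E.filter (fun e => e.1 = i)) ∪ S

/-- The weights `p` form a probability distribution over the matchings contained in `E`. -/
structure IsMatchingLottery (p : Finset (Fin n × Fin m) → ℝ) (E : Finset (Fin n × Fin m)) :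
    Prop where
  nonneg : ∀ M, 0 ≤ p M
  sum_eq_one : ∑ M, p M = 1
  support : ∀ M, p M ≠ 0 → IsMatching M ∧ M ⊆ E

/-- The expectation of `f` when an edge set is drawn with the weights `p`. -/
def expectation (p f : Finset (Fin n × Fin m) → ℝ) : ℝ :=
  ∑ M, p M * f M

/-- Truthfulness in expectation: no job gains by misreporting its edges, where only the edges it
really has count towards its value. -/
def IsTruthfulInExpectation
    (A : (Fin n × Fin m → ℝ) → Finset (Fin n × Fin m) → Finset (Fin n × Fin m) → ℝ) : Prop :=
  ∀ v : Fin n × Fin m → ℝ, (∀ e, 0 ≤ v e) →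
    ∀ (E S : Finset (Fin n × Fin m)) (i : Fin n), (∀ e ∈ S, e.1 = i) →
      expectation (A v (misreport E i S))
          (fun M => ∑ e ∈ M ∩ E.filter (fun e => e.1 = i), v e) ≤
        expectation (A v E) (fun M => ∑ e ∈ M ∩ E.filter (fun e => e.1 = i), v e)

theorem favouriteValue_nonneg (k : Fin m) {x : ℝ} (hx : 0 ≤ x) (e : Fin n × Fin m) :
    0 ≤ favouriteValue k x e := by
  unfold favouriteValue
  split_ifs
  exacts [zero_le_one, hx]

theorem mem_twoJobGraph {i j : Fin n} {e : Fin n × Fin m} :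
    e ∈ twoJobGraph i j ↔ e.1 = i ∨ e.1 = j := by
  simp [twoJobGraph]

theorem mem_misreport {E S : Finset (Fin n × Fin m)} {i : Fin n} {e : Fin n × Fin m} :
    e ∈ misreport E i S ↔ e ∈ E ∧ e.1 ≠ i ∨ e ∈ S := by
  simp only [misreport, Finset.mem_union, Finset.mem_sdiff, Finset.mem_filter]
  tauto

theorem misreport_subset {E S : Finset (Fin n × Fin m)} (hS : S ⊆ E) (i : Fin n) :
    misreport E i S ⊆ E :=
  Finset.union_subset Finset.sdiff_subset hS

theorem welfare_eq_jobValue_add_jobValue {i j : Fin n} (hij : i ≠ j) (v : Fin n × Fin m → ℝ)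
    {M : Finset (Fin n × Fin m)} (hM : M ⊆ twoJobGraph i j) :
    welfare v M = jobValue v i M + jobValue v j M := by
  have hjobs : ∀ e ∈ M, e.1 ∈ ({i, j} : Finset (Fin n)) := fun e he => by
    simpa using mem_twoJobGraph.1 (hM he)
  rw [welfare, ← Finset.sum_fiberwise_of_maps_to hjobs, Finset.sum_pair hij, jobValue, jobValue]

theorem jobValue_eq_mul_edgeIndicator (v : Fin n × Fin m → ℝ) {i : Fin n} {k : Fin m}
    {M : Finset (Fin n × Fin m)} (hM : ∀ e ∈ M, e.1 = i → e = (i, k)) :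
    jobValue v i M = v (i, k) * edgeIndicator (i, k) M := by
  have hedges : {e ∈ M | e.1 = i} = {e ∈ M | e = (i, k)} :=
    Finset.filter_congr fun e he => ⟨hM e he, fun h => by rw [h]⟩
  rw [jobValue, hedges, Finset.filter_eq', edgeIndicator]
  split_ifs <;> simp

namespace IsMatching

variable {M : Finset (Fin n × Fin m)}

theorem edgeIndicator_add_edgeIndicator_le_one (hM : IsMatching M) {i j : Fin n} (hij : i ≠ j)
    (k : Fin m) : edgeIndicator (i, k) M + edgeIndicator (j, k) M ≤ 1 := by
  have hnot : ¬((i, k) ∈ M ∧ (j, k) ∈ M) := fun ⟨hi, hj⟩ =>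
    (hM _ hi _ hj fun h => hij (congrArg Prod.fst h)).2 rfl
  by_cases hi : (i, k) ∈ M <;> by_cases hj : (j, k) ∈ M <;> simp_all [edgeIndicator]

theorem jobValue_eq_of_mem (hM : IsMatching M) (v : Fin n × Fin m → ℝ) {e : Fin n × Fin m}
    (he : e ∈ M) : jobValue v e.1 M = v e := by
  have hedges : {e' ∈ M | e'.1 = e.1} = {e} := by
    ext e'
    simp only [Finset.mem_filter, Finset.mem_singleton]
    refine ⟨fun ⟨he', hfst⟩ => ?_, by rintro rfl; exact ⟨he, rfl⟩⟩
    by_contra hne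
    exact (hM e' he' e he hne).1 hfst
  rw [jobValue, hedges, Finset.sum_singleton]

theorem jobValue_favouriteValue_le (hM : IsMatching M) (i : Fin n) (k : Fin m) {x : ℝ}
    (hx : 0 ≤ x) :
    jobValue (favouriteValue k x) i M ≤ x + (1 - x) * edgeIndicator (i, k) M := by
  by_cases hfav : (i, k) ∈ M
  · have hvalue := hM.jobValue_eq_of_mem (favouriteValue k x) hfav
    simp [hvalue, favouriteValue, edgeIndicator, hfav]
  suffices jobValue (favouriteValue k x) i M ≤ x by simpa [edgeIndicator, hfav] using this
  rcases Finset.eq_empty_or_nonempty {e ∈ M | e.1 = i} with hempty | ⟨⟨i', l⟩, hmem⟩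
  · simpa [jobValue, hempty] using hx
  · obtain ⟨he, rfl⟩ := Finset.mem_filter.1 hmem
    have hl : l ≠ k := fun h => hfav (h ▸ he)
    have hvalue := hM.jobValue_eq_of_mem (favouriteValue k x) he
    simp [hvalue, favouriteValue, hl]

theorem welfare_favouriteValue_le (hM : IsMatching M) {i j : Fin n} (hij : i ≠ j) {k : Fin m}
    (hsub : M ⊆ misreport (twoJobGraph i j) i {(i, k)}) {x : ℝ} (hx0 : 0 ≤ x) (hx1 : x ≤ 1) :
    welfare (favouriteValue k x) M ≤ 1 + x * jobValue (favouriteValue k x) i M := by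
  have hedge : ∀ e ∈ M, e.1 = i → e = (i, k) := fun e he hi => by
    simpa [mem_misreport, hi] using hsub he
  have hjob : jobValue (favouriteValue k x) i M = edgeIndicator (i, k) M := by
    simp [jobValue_eq_mul_edgeIndicator _ hedge, favouriteValue]
  have hsub' : M ⊆ twoJobGraph i j :=
    hsub.trans (misreport_subset (by simp [mem_twoJobGraph]) i)
  rw [welfare_eq_jobValue_add_jobValue hij _ hsub', hjob]
  calc
    edgeIndicator (i, k) M + jobValue (favouriteValue k x) j M
      ≤ edgeIndicator (i, k) M + (x + (1 - x) * edgeIndicator (j, k) M) := by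
        gcongr
        exact hM.jobValue_favouriteValue_le j k hx0
    _ ≤ edgeIndicator (i, k) M + (x + (1 - x) * (1 - edgeIndicator (i, k) M)) := by
        gcongr
        exact le_sub_iff_add_le'.2 (hM.edgeIndicator_add_edgeIndicator_le_one hij k)
    _ = 1 + x * edgeIndicator (i, k) M := by ring

end IsMatching

theorem isMatching_pair {i j : Fin n} (hij : i ≠ j) {k l : Fin m} (hkl : k ≠ l) :
    IsMatching {(i, k), (j, l)} := by
  simp [IsMatching, hij, hij.symm, hkl, hkl.symm]

theorem welfare_favouriteValue_pair {i j : Fin n} (hij : i ≠ j) {k l : Fin m} (hkl : k ≠ l)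
    (x : ℝ) : welfare (favouriteValue k x) {(i, k), (j, l)} = 1 + x := by
  simp [welfare, favouriteValue, hij, hkl.symm]

theorem pair_subset_misreport_twoJobGraph {i j : Fin n} (hij : i ≠ j) (k l : Fin m) :
    {(i, k), (j, l)} ⊆ misreport (twoJobGraph i j) i {(i, k)} := by
  simp [Finset.insert_subset_iff, mem_misreport, mem_twoJobGraph, hij.symm]

namespace IsMatchingLottery

variable {p f g : Finset (Fin n × Fin m) → ℝ} {E : Finset (Fin n × Fin m)}

theorem expectation_mono (hp : IsMatchingLottery p E)
    (hfg : ∀ M, IsMatching M → M ⊆ E → f M ≤ g M) : expectation p f ≤ expectation p g := by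
  refine Finset.sum_le_sum fun M _ => ?_
  by_cases hM : p M = 0
  · simp [hM]
  · obtain ⟨hmatching, hsub⟩ := hp.support M hM
    exact mul_le_mul_of_nonneg_left (hfg M hmatching hsub) (hp.nonneg M)

theorem expectation_congr (hp : IsMatchingLottery p E) (hfg : ∀ M ⊆ E, f M = g M) :
    expectation p f = expectation p g :=
  le_antisymm (hp.expectation_mono fun M _ hM => (hfg M hM).le)
    (hp.expectation_mono fun M _ hM => (hfg M hM).ge)

theorem expectation_const_add_mul (hp : IsMatchingLottery p E) (c d : ℝ) :
    expectation p (fun M => c + d * f M) = c + d * expectation p f := by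
  simp only [expectation, mul_add, Finset.sum_add_distrib, mul_left_comm _ d, ← Finset.mul_sum,
    ← Finset.sum_mul, hp.sum_eq_one, one_mul]

theorem expectation_edgeIndicator_add_le_one (hp : IsMatchingLottery p E) {i j : Fin n}
    (hij : i ≠ j) (k : Fin m) :
    expectation p (edgeIndicator (i, k)) + expectation p (edgeIndicator (j, k)) ≤ 1 :=
  calc
    expectation p (edgeIndicator (i, k)) + expectation p (edgeIndicator (j, k))
      = expectation p (fun M => edgeIndicator (i, k) M + edgeIndicator (j, k) M) := by
        simp only [expectation, mul_add, Finset.sum_add_distrib]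
    _ ≤ expectation p (fun _ => 1) :=
        hp.expectation_mono fun _ hM _ => hM.edgeIndicator_add_edgeIndicator_le_one hij k
    _ = 1 := by simp only [expectation, mul_one, hp.sum_eq_one]

theorem expectation_jobValue_le (hp : IsMatchingLottery p E) {i : Fin n} {k : Fin m} {x : ℝ}
    (hx : 0 ≤ x) :
    expectation p (jobValue (favouriteValue k x) i) ≤
      x + (1 - x) * expectation p (edgeIndicator (i, k)) := by
  rw [← hp.expectation_const_add_mul]
  exact hp.expectation_mono fun _ hM _ => hM.jobValue_favouriteValue_le i k hx

theorem expectation_welfare_le {i j : Fin n} {k : Fin m}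
    (hp : IsMatchingLottery p (misreport (twoJobGraph i j) i {(i, k)})) (hij : i ≠ j) {x : ℝ}
    (hx0 : 0 ≤ x) (hx1 : x ≤ 1) :
    expectation p (welfare (favouriteValue k x)) ≤
      1 + x * expectation p (jobValue (favouriteValue k x) i) := by
  rw [← hp.expectation_const_add_mul]
  exact hp.expectation_mono fun _ hM hsub => hM.welfare_favouriteValue_le hij hsub hx0 hx1

end IsMatchingLottery

section Mechanism

variable {A : (Fin n × Fin m → ℝ) → Finset (Fin n × Fin m) → Finset (Fin n × Fin m) → ℝ}

theorem IsTruthfulInExpectation.expectation_jobValue_misreport_le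
    (hA : ∀ v E, IsMatchingLottery (A v E) E) (htruth : IsTruthfulInExpectation A)
    {v : Fin n × Fin m → ℝ} (hv : ∀ e, 0 ≤ v e) {E S : Finset (Fin n × Fin m)} (hSE : S ⊆ E)
    {i : Fin n} (hS : ∀ e ∈ S, e.1 = i) :
    expectation (A v (misreport E i S)) (jobValue v i) ≤ expectation (A v E) (jobValue v i) := by
  have hvalue : ∀ M ⊆ E, jobValue v i M = ∑ e ∈ M ∩ E.filter (fun e => e.1 = i), v e :=
    fun M hM => by rw [jobValue, Finset.inter_filter, Finset.inter_eq_left.2 hM]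
  rw [(hA v _).expectation_congr fun M hM => hvalue M (hM.trans (misreport_subset hSE i)),
    (hA v E).expectation_congr hvalue]
  exact htruth v hv E S i hS

theorem IsTruthfulInExpectation.expectation_welfare_misreport_le
    (hA : ∀ v E, IsMatchingLottery (A v E) E) (htruth : IsTruthfulInExpectation A)
    {i j : Fin n} (hij : i ≠ j) {k : Fin m} {x : ℝ} (hx0 : 0 ≤ x) (hx1 : x ≤ 1)
    (hhalf : expectation (A (favouriteValue k x) (twoJobGraph i j)) (edgeIndicator (i, k)) ≤
      1 / 2) :
    expectation (A (favouriteValue k x) (misreport (twoJobGraph i j) i {(i, k)}))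
      (welfare (favouriteValue k x)) ≤ 1 + x * (1 + x) / 2 := by
  set v : Fin n × Fin m → ℝ := favouriteValue k x
  set E : Finset (Fin n × Fin m) := twoJobGraph i j
  have hjob : expectation (A v (misreport E i {(i, k)})) (jobValue v i) ≤ (1 + x) / 2 :=
    calc
      expectation (A v (misreport E i {(i, k)})) (jobValue v i)
        ≤ expectation (A v E) (jobValue v i) :=
          htruth.expectation_jobValue_misreport_le hA (favouriteValue_nonneg k hx0)
            (by simp [E, mem_twoJobGraph]) (by simp)
      _ ≤ x + (1 - x) * expectation (A v E) (edgeIndicator (i, k)) :=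
          (hA v E).expectation_jobValue_le hx0
      _ ≤ x + (1 - x) * (1 / 2) := by
          gcongr
      _ = (1 + x) / 2 := by ring
  calc
    expectation (A v (misreport E i {(i, k)})) (welfare v)
      ≤ 1 + x * expectation (A v (misreport E i {(i, k)})) (jobValue v i) :=
        (hA v _).expectation_welfare_le hij hx0 hx1
    _ ≤ 1 + x * ((1 + x) / 2) := by gcongr
    _ = 1 + x * (1 + x) / 2 := by ring

theorem IsTruthfulInExpectation.exists_expectation_welfare_le
    (hA : ∀ v E, IsMatchingLottery (A v E) E) (htruth : IsTruthfulInExpectation A)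
    (hn : 2 ≤ n) (hm : 2 ≤ m) {x : ℝ} (hx0 : 0 ≤ x) (hx1 : x ≤ 1) :
    ∃ (v : Fin n × Fin m → ℝ) (E M : Finset (Fin n × Fin m)),
      (∀ e, 0 ≤ v e) ∧ IsMatching M ∧ M ⊆ E ∧ welfare v M = 1 + x ∧
        expectation (A v E) (welfare v) ≤ 1 + x * (1 + x) / 2 := by
  obtain ⟨k, l, hkl⟩ := (Fin.nontrivial_iff_two_le.2 hm).exists_pair_ne
  obtain ⟨i, j, hij, hhalf⟩ : ∃ i j : Fin n, i ≠ j ∧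
      expectation (A (favouriteValue k x) (twoJobGraph i j)) (edgeIndicator (i, k)) ≤ 1 / 2 := by
    obtain ⟨i, j, hij⟩ := (Fin.nontrivial_iff_two_le.2 hn).exists_pair_ne
    have hsum := (hA (favouriteValue k x) (twoJobGraph i j)).expectation_edgeIndicator_add_le_one
      hij k
    rcases le_or_gt (expectation (A (favouriteValue k x) (twoJobGraph i j)) (edgeIndicator (i, k)))
      (1 / 2) with hi | hi
    · exact ⟨i, j, hij, hi⟩
    · have hcomm : twoJobGraph (m := m) j i = twoJobGraph i j := by
        rw [twoJobGraph, twoJobGraph, Finset.pair_comm]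
      exact ⟨j, i, hij.symm, by rw [hcomm]; linarith⟩
  exact ⟨favouriteValue k x, misreport (twoJobGraph i j) i {(i, k)}, {(i, k), (j, l)},
    favouriteValue_nonneg k hx0, isMatching_pair hij hkl, pair_subset_misreport_twoJobGraph hij k l,
    welfare_favouriteValue_pair hij hkl x,
    htruth.expectation_welfare_misreport_le hA hij hx0 hx1 hhalf⟩

end Mechanism

theorem mul_lt_sqrt_two_of_lt_div {α w : ℝ} (hα : α < 2 / (2 * √2 - 1)) (hw0 : 0 ≤ w)
    (hw : w ≤ 1 + (√2 - 1) * √2 / 2) : α * w < √2 := by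
  have hdenom : 0 < 2 * √2 - 1 := by linarith [Real.one_lt_sqrt_two]
  have hbound : 1 + (√2 - 1) * √2 / 2 = √2 * (2 * √2 - 1) / 2 := by
    linarith [Real.mul_self_sqrt (zero_le_two (α := ℝ))]
  rcases hw0.eq_or_lt with rfl | hwpos
  · simp
  calc
    α * w < 2 / (2 * √2 - 1) * w := by gcongr
    _ ≤ 2 / (2 * √2 - 1) * (√2 * (2 * √2 - 1) / 2) := by
      gcongr
      exact hw.trans_eq hbound
    _ = √2 := by field_simp

theorem stmt2_general (hn : 2 ≤ n) (hm : 2 ≤ m)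
    {A : (Fin n × Fin m → ℝ) → Finset (Fin n × Fin m) → Finset (Fin n × Fin m) → ℝ}
    (hA : ∀ v E, IsMatchingLottery (A v E) E) (htruth : IsTruthfulInExpectation A)
    {α : ℝ} (hα : α < 2 / (2 * √2 - 1)) :
    ∃ (v : Fin n × Fin m → ℝ) (E M : Finset (Fin n × Fin m)),
      (∀ e, 0 ≤ v e) ∧ IsMatching M ∧ M ⊆ E ∧
        α * expectation (A v E) (welfare v) < welfare v M := by
  obtain ⟨v, E, M, hv, hM, hME, hopt, hle⟩ :=
    htruth.exists_expectation_welfare_le hA hn hm (x := √2 - 1)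
      (by linarith [Real.one_lt_sqrt_two]) (by linarith [Real.sqrt_two_lt_three_halves])
  refine ⟨v, E, M, hv, hM, hME, ?_⟩
  have hwelfare : 0 ≤ expectation (A v E) (welfare v) :=
    Finset.sum_nonneg fun M _ => mul_nonneg ((hA v E).nonneg M) (Finset.sum_nonneg fun e _ => hv e)
  rw [hopt, add_sub_cancel]
  rw [add_sub_cancel] at hle
  exact mul_lt_sqrt_two_of_lt_div hα hwelfare hle

/-- No truthful-in-expectation randomized mechanism for maximum weight bipartite
matching (with 2 jobs and 2 machines) gives better than a 2/(2√2 − 1) approximation. -/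
theorem stmt2
    (A : (Fin 2 × Fin 2 → ℝ) → Finset (Fin 2 × Fin 2) → Finset (Fin 2 × Fin 2) → ℝ)
    (hnonneg : ∀ v E M, 0 ≤ A v E M)
    (hsum : ∀ v E, ∑ M : Finset (Fin 2 × Fin 2), A v E M = 1)
    (hsupp : ∀ v E M, A v E M ≠ 0 → IsMatching M ∧ M ⊆ E)
    (htruth : ∀ (v : Fin 2 × Fin 2 → ℝ), (∀ e, 0 ≤ v e) →
      ∀ (E Ei' : Finset (Fin 2 × Fin 2)) (i : Fin 2), (∀ e ∈ Ei', e.1 = i) →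
        ∑ M : Finset (Fin 2 × Fin 2),
            A v ((E \ E.filter (fun e => e.1 = i)) ∪ Ei') M *
              ∑ e ∈ M ∩ E.filter (fun e => e.1 = i), v e
          ≤ ∑ M : Finset (Fin 2 × Fin 2),
              A v E M * ∑ e ∈ M ∩ E.filter (fun e => e.1 = i), v e) :
    ∀ α : ℝ, α < 2 / (2 * Real.sqrt 2 - 1) →
      ∃ (v : Fin 2 × Fin 2 → ℝ) (E M : Finset (Fin 2 × Fin 2)),
        (∀ e, 0 ≤ v e) ∧ IsMatching M ∧ M ⊆ E ∧
          α * ∑ M' : Finset (Fin 2 × Fin 2), A v E M' * ∑ e ∈ M', v e < ∑ e ∈ M, v e :=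
  fun _ hα => stmt2_general le_rfl le_rfl
    (fun v E => ⟨hnonneg v E, hsum v E, hsupp v E⟩) htruth hα
end

section
/- Fix numbers of jobs n and machines m, values v : Fin n × Fin m → ℝ with v ≥ 0, and a linear order ⊴ on Fin n × Fin m such that e ⊴ e' implies v(e) ≥ v(e') (edges listed in decreasing order of value, ties broken by the order, independently of reports). For an edge set E, say that X is the greedy matching for E if X ⊆ E and for every e ∈ E one has: e ∈ X if and only if there is no e' ∈ X with e' ≠ e, e' ⊴ e, and e' sharing a coordinate (job or machine) with e. Let E be an edge set, i a job, E'_i a set of pairs with first coordinate i, and E' = (E \ E_i) ∪ E'_i. If X is the greedy matching for E and X' is the greedy matching for E', then ∑_{e ∈ X ∩ E_i} v(e) ≥ ∑_{e ∈ X' ∩ E_i} v(e). That is, the greedy algorithm processing edges in a bid-independent decreasing-value order is a truthful mechanism without money for maximum weight bipartite matching in the private graph model. -/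
/-!
Suppose a misreport wins job `i` an edge `a` that it truly has. If the truthful run gave `i` no edge
at or before `a`, then neither run would have picked an edge of `i` before `a`, so up to that point
both runs would be the greedy run on the edges of the other jobs, and would coincide. Then `a` would
be free in the truthful run as well, and be picked: a contradiction. So the truthful run gives `i`
an edge at or before `a`, hence one of at least the value of `a`, and no run gives `i` two edges.
-/

open Set

section Greedy

variable {α : Type*} [PartialOrder α] {conflict : α → α → Prop} {E E' F X X' S D : Set α} {a : α}

/-- `X` is the outcome of the greedy algorithm on `E`: going through `E` in increasing order, an
element is selected when no earlier selected element conflicts with it. For matchings, the elements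
are edges and `conflict` says that two edges share an endpoint; only its values `conflict e' e` with
`e' < e` matter. -/
structure IsGreedy (conflict : α → α → Prop) (E X : Set α) : Prop where
  subset : X ⊆ E
  mem_iff : ∀ e ∈ E, e ∈ X ↔ ∀ e' ∈ X, e' < e → ¬ conflict e' e

theorem isGreedy_iff_ne_and_le :
    IsGreedy conflict E X ↔
      X ⊆ E ∧ ∀ e ∈ E, (e ∈ X ↔ ¬ ∃ e' ∈ X, e' ≠ e ∧ e' ≤ e ∧ conflict e' e) := by
  have blocked_iff (e : α) : (∀ e' ∈ X, e' < e → ¬ conflict e' e) ↔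
      ¬ ∃ e' ∈ X, e' ≠ e ∧ e' ≤ e ∧ conflict e' e := by
    simp only [lt_iff_le_and_ne, not_exists, not_and]
    grind
  simp only [← blocked_iff]
  exact ⟨fun h ↦ ⟨h.subset, h.mem_iff⟩, fun h ↦ ⟨h.1, h.2⟩⟩

namespace IsGreedy

theorem not_conflict (hX : IsGreedy conflict E X) {e e' : α} (he : e ∈ X) (he' : e' ∈ X)
    (hlt : e' < e) : ¬ conflict e' e :=
  (hX.mem_iff e (hX.subset he)).1 he e' he' hlt

theorem of_subset (hX : IsGreedy conflict E X) (hXF : X ⊆ F) (hFE : F ⊆ E) :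
    IsGreedy conflict F X :=
  ⟨hXF, fun e he ↦ hX.mem_iff e (hFE he)⟩

theorem inter_isLowerSet (hX : IsGreedy conflict E X) (hD : IsLowerSet D) :
    IsGreedy conflict (E ∩ D) (X ∩ D) where
  subset := inter_subset_inter_left D hX.subset
  mem_iff := by
    rintro e ⟨heE, heD⟩
    rw [mem_inter_iff, and_iff_left heD, hX.mem_iff e heE]
    exact ⟨fun h e' he' ↦ h e' he'.1, fun h e' he' hlt ↦ h e' ⟨he', hD hlt.le heD⟩ hlt⟩

theorem unique (hE : E.IsWF) (hX : IsGreedy conflict E X) (hX' : IsGreedy conflict E X') :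
    X = X' := by
  have agree (e : α) (he : e ∈ E) : e ∈ X ↔ e ∈ X' := by
    refine WellFoundedOn.induction (P := fun e ↦ e ∈ X ↔ e ∈ X') hE he fun e he ih ↦ ?_
    rw [hX.mem_iff e he, hX'.mem_iff e he]
    exact ⟨fun h e' he' hlt ↦ h e' ((ih e' (hX'.subset he') hlt).2 he') hlt,
      fun h e' he' hlt ↦ h e' ((ih e' (hX.subset he') hlt).1 he') hlt⟩
  exact Subset.antisymm (fun e he ↦ (agree e (hX.subset he)).1 he)
    fun e he ↦ (agree e (hX'.subset he)).2 he

theorem inter_subsingleton (hX : IsGreedy conflict E X) (hS : S.Pairwise conflict)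
    (hchain : IsChain (· ≤ ·) S) : (X ∩ S).Subsingleton := by
  rintro e ⟨heX, heS⟩ e' ⟨he'X, he'S⟩
  by_contra hne
  rcases hchain heS he'S hne with hle | hle
  · exact hX.not_conflict he'X heX (hle.lt_of_ne hne) (hS heS he'S hne)
  · exact hX.not_conflict heX he'X (hle.lt_of_ne' hne) (hS he'S heS (Ne.symm hne))

theorem diff_inter_Iio (hX : IsGreedy conflict E X) (hfree : ∀ e ∈ X ∩ S, ¬ e < a) :
    IsGreedy conflict ((E \ S) ∩ Iio a) (X ∩ Iio a) :=
  (hX.inter_isLowerSet (isLowerSet_Iio a)).of_subset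
    (fun e he ↦ ⟨⟨hX.subset he.1, fun heS ↦ hfree e ⟨he.1, heS⟩ he.2⟩, he.2⟩)
    (inter_subset_inter_left _ sdiff_subset)

theorem exists_mem_inter_le (hE : E.IsWF) (hS : S.Pairwise conflict) (hEE' : E \ S = E' \ S)
    (hX : IsGreedy conflict E X) (hX' : IsGreedy conflict E' X') (haX' : a ∈ X' ∩ S)
    (haE : a ∈ E) : ∃ b ∈ X ∩ S, b ≤ a := by
  by_contra! hnone
  have free : ∀ e ∈ X ∩ S, ¬ e < a := fun e he hlt ↦ hnone e he hlt.le
  have free' : ∀ e ∈ X' ∩ S, ¬ e < a := fun e he hlt ↦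
    hX'.not_conflict haX'.1 he.1 hlt (hS he.2 haX'.2 hlt.ne)
  have agree : X ∩ Iio a = X' ∩ Iio a :=
    unique (hE.mono (inter_subset_left.trans sdiff_subset)) (hX.diff_inter_Iio free)
      (hEE' ▸ hX'.diff_inter_Iio free')
  have haX : a ∈ X := (hX.mem_iff a haE).2 fun e he hlt ↦
    have heX' : e ∈ X' ∩ Iio a := agree ▸ ⟨he, hlt⟩
    hX'.not_conflict haX'.1 heX'.1 hlt
  exact hnone a ⟨haX, haX'.2⟩ le_rfl

end IsGreedy

end Greedy

theorem pairwise_fst_eq_or_snd_eq {ι κ : Type*} (i : ι) :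
    {e : ι × κ | e.1 = i}.Pairwise fun e' e ↦ e'.1 = e.1 ∨ e'.2 = e.2 :=
  fun _ he' _ he _ ↦ Or.inl (he'.trans he.symm)

theorem sdiff_setOf_eq_replace_sdiff_setOf {α : Type*} [DecidableEq α] {p : α → Prop}
    [DecidablePred p] {E F : Finset α} (hF : ∀ e ∈ F, p e) :
    (E : Set α) \ {e | p e} = ((E \ E.filter p ∪ F : Finset α) : Set α) \ {e | p e} := by
  ext e
  have := hF e
  simp only [Set.mem_sdiff, Finset.mem_coe, Set.mem_ofPred_eq, Finset.mem_union, Finset.mem_sdiff,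
    Finset.mem_filter]
  tauto

/-- The order given by a bare relation, passed to the lemmas above in place of any order that the
type already carries, such as the componentwise one on a product. -/
abbrev partialOrderOfIsPartialOrder {α : Type*} (r : α → α → Prop) [h : IsPartialOrder α r] :
    PartialOrder α where
  le := r
  lt e e' := r e e' ∧ ¬ r e' e
  le_refl := h.refl
  le_trans := h.trans
  le_antisymm := h.antisymm

theorem stmt3_general {α M : Type*} [DecidableEq α] [PartialOrder α]
    [AddCommMonoid M] [PartialOrder M] [IsOrderedAddMonoid M]
    {conflict : α → α → Prop} {v : α → M} {S : Set α} [DecidablePred (· ∈ S)]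
    (hS : S.Pairwise conflict) (hchain : IsChain (· ≤ ·) S)
    (hv : ∀ e ∈ S, 0 ≤ v e) (hmono : AntitoneOn v S)
    {E E' X X' : Finset α} (hEE' : (E : Set α) \ S = (E' : Set α) \ S)
    (hX : IsGreedy conflict (E : Set α) X) (hX' : IsGreedy conflict (E' : Set α) X') :
    ∑ e ∈ X' ∩ E.filter (· ∈ S), v e ≤ ∑ e ∈ X ∩ E.filter (· ∈ S), v e := by
  have nonneg : ∀ e ∈ X ∩ E.filter (· ∈ S), 0 ≤ v e := fun e he ↦
    hv e (Finset.mem_filter.1 (Finset.mem_inter.1 he).2).2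
  rcases (X' ∩ E.filter (· ∈ S)).eq_empty_or_nonempty with hempty | ⟨a, ha⟩
  · rw [hempty, Finset.sum_empty]
    exact Finset.sum_nonneg nonneg
  · obtain ⟨haX', haE, haS⟩ : a ∈ X' ∧ a ∈ E ∧ a ∈ S := by simpa using ha
    obtain ⟨b, ⟨hbX, hbS⟩, hba⟩ :=
      IsGreedy.exists_mem_inter_le E.finite_toSet.isWF hS hEE' hX hX' ⟨haX', haS⟩ haE
    have only_a : ∀ e ∈ X' ∩ E.filter (· ∈ S), e = a := fun e he ↦ by
      simp only [Finset.mem_inter, Finset.mem_filter] at he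
      exact hX'.inter_subsingleton hS hchain ⟨he.1, he.2.2⟩ ⟨haX', haS⟩
    calc ∑ e ∈ X' ∩ E.filter (· ∈ S), v e
      _ = v a := by rw [Finset.eq_singleton_iff_unique_mem.2 ⟨ha, only_a⟩, Finset.sum_singleton]
      _ ≤ v b := hmono hbS haS hba
      _ ≤ ∑ e ∈ X ∩ E.filter (· ∈ S), v e := Finset.single_le_sum nonneg <|
        Finset.mem_inter.2 ⟨hbX, Finset.mem_filter.2 ⟨hX.subset hbX, hbS⟩⟩

/-- Truthfulness of the greedy algorithm for maximum weight bipartite matching,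
processing edges in a bid-independent decreasing-value order. -/
theorem stmt3 (n m : ℕ) (v : Fin n × Fin m → ℝ) (hv : ∀ e, 0 ≤ v e)
    (le : Fin n × Fin m → Fin n × Fin m → Prop)
    (hle : IsLinearOrder (Fin n × Fin m) le)
    (hmono : ∀ e e', le e e' → v e' ≤ v e)
    (E Ei' X X' : Finset (Fin n × Fin m)) (i : Fin n)
    (hEi' : ∀ e ∈ Ei', e.1 = i)
    (E' : Finset (Fin n × Fin m))
    (hE' : E' = (E \ E.filter (fun e => e.1 = i)) ∪ Ei')
    (hXsub : X ⊆ E)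
    (hXgreedy : ∀ e ∈ E,
      (e ∈ X ↔ ¬ ∃ e' ∈ X, e' ≠ e ∧ le e' e ∧ (e'.1 = e.1 ∨ e'.2 = e.2)))
    (hX'sub : X' ⊆ E')
    (hX'greedy : ∀ e ∈ E',
      (e ∈ X' ↔ ¬ ∃ e' ∈ X', e' ≠ e ∧ le e' e ∧ (e'.1 = e.1 ∨ e'.2 = e.2))) :
    ∑ e ∈ X' ∩ E.filter (fun e => e.1 = i), v e
      ≤ ∑ e ∈ X ∩ E.filter (fun e => e.1 = i), v e := by
  let _ : PartialOrder (Fin n × Fin m) := partialOrderOfIsPartialOrder le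
  exact stmt3_general (pairwise_fst_eq_or_snd_eq i) (fun e _ e' _ _ ↦ hle.total e e')
    (fun e _ ↦ hv e) (fun e _ e' _ ↦ hmono e e') (hE' ▸ sdiff_setOf_eq_replace_sdiff_setOf hEi')
    (isGreedy_iff_ne_and_le.2 ⟨hXsub, hXgreedy⟩) (isGreedy_iff_ne_and_le.2 ⟨hX'sub, hX'greedy⟩)
end

section
/- Fix values v : Fin n × Fin m → ℝ with v ≥ 0 and an edge set E ⊆ Fin n × Fin m. Let X ⊆ E be a matching with the property that every edge e ∈ E \ X shares a coordinate (job or machine) with some edge e' ∈ X satisfying v(e') ≥ v(e). Then for every matching M ⊆ E, ∑_{e ∈ M} v(e) ≤ 2 · ∑_{e ∈ X} v(e). In particular, the greedy matching obtained by processing edges of E in decreasing order of value is a 2-approximation to the maximum weight matching in E. -/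
namespace IsMatching

theorem injOn_fst_s4 {n m : ℕ} {M : Finset (Fin n × Fin m)} (hM : IsMatching M) :
    Set.InjOn Prod.fst (M : Set (Fin n × Fin m)) := by
  intro e he e' he' heq
  by_contra hne
  exact (hM e he e' he' hne).1 heq

theorem injOn_snd {n m : ℕ} {M : Finset (Fin n × Fin m)} (hM : IsMatching M) :
    Set.InjOn Prod.snd (M : Set (Fin n × Fin m)) := by
  intro e he e' he' heq
  by_contra hne
  exact (hM e he e' he' hne).2 heq

end IsMatching

section Charging

variable {R : Type*} [AddCommMonoid R] [Preorder R] [IsOrderedAddMonoid R]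

theorem sum_le_sum_of_mapsTo_of_injOn {ι ι' : Type*} {s : Finset ι} {t : Finset ι'} {v : ι → R}
    {w : ι' → R} {φ : ι → ι'} (hmaps : Set.MapsTo φ s t) (hinj : Set.InjOn φ s)
    (hvw : ∀ i ∈ s, v i ≤ w (φ i)) (hw : ∀ j ∈ t, 0 ≤ w j) :
    ∑ i ∈ s, v i ≤ ∑ j ∈ t, w j := by
  classical
  calc
    ∑ i ∈ s, v i ≤ ∑ i ∈ s, w (φ i) := Finset.sum_le_sum hvw
    _ = ∑ j ∈ s.image φ, w j := (Finset.sum_image hinj).symm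
    _ ≤ ∑ j ∈ t, w j :=
      Finset.sum_le_sum_of_subset_of_nonneg (Finset.image_subset_iff.2 hmaps) fun j hj _ ↦ hw j hj

theorem sum_le_sum_of_injOn_of_exists_eq {ι ι' κ : Type*} {s : Finset ι} {t : Finset ι'}
    {v : ι → R} {w : ι' → R} {f : ι → κ} {g : ι' → κ} (hf : Set.InjOn f s)
    (hvw : ∀ i ∈ s, ∃ j ∈ t, g j = f i ∧ v i ≤ w j) (hw : ∀ j ∈ t, 0 ≤ w j) :
    ∑ i ∈ s, v i ≤ ∑ j ∈ t, w j := by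
  rcases s.eq_empty_or_nonempty with rfl | ⟨i₀, hi₀⟩
  · simpa only [Finset.sum_empty] using Finset.sum_nonneg hw
  have : Nonempty ι' := ⟨(hvw i₀ hi₀).choose⟩
  choose! φ hφt hφf hφv using hvw
  have hinj : Set.InjOn φ s := fun i hi i' hi' heq ↦
    hf hi hi' (by rw [← hφf i hi, heq, hφf i' hi'])
  exact sum_le_sum_of_mapsTo_of_injOn hφt hinj hφv hw

theorem stmt4_general {ε α β : Type*} {job : ε → α} {machine : ε → β} {v : ε → R}
    {M X : Finset ε} (hv : ∀ e ∈ X, 0 ≤ v e)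
    (hcover : ∀ e ∈ M, e ∉ X →
      ∃ e' ∈ X, (job e' = job e ∨ machine e' = machine e) ∧ v e ≤ v e')
    (hjob : Set.InjOn job M) (hmachine : Set.InjOn machine M) :
    ∑ e ∈ M, v e ≤ 2 • ∑ e ∈ X, v e := by
  classical
  let ChargedByJob (e : ε) : Prop := ∃ e' ∈ X, job e' = job e ∧ v e ≤ v e'
  have charged_by_machine : ∀ e ∈ M, ¬ChargedByJob e →
      ∃ e' ∈ X, machine e' = machine e ∧ v e ≤ v e' := by
    intro e he hnot
    have heX : e ∉ X := fun heX ↦ hnot ⟨e, heX, rfl, le_rfl⟩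
    obtain ⟨e', he', hshare, hle⟩ := hcover e he heX
    exact ⟨e', he', hshare.resolve_left fun heq ↦ hnot ⟨e', he', heq, hle⟩, hle⟩
  have sum_job : ∑ e ∈ M with ChargedByJob e, v e ≤ ∑ e ∈ X, v e :=
    sum_le_sum_of_injOn_of_exists_eq (hjob.mono (Finset.filter_subset _ M))
      (fun e he ↦ (Finset.mem_filter.1 he).2) hv
  have sum_machine : ∑ e ∈ M with ¬ChargedByJob e, v e ≤ ∑ e ∈ X, v e :=
    sum_le_sum_of_injOn_of_exists_eq (hmachine.mono (Finset.filter_subset _ M))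
      (fun e he ↦ (Finset.mem_filter.1 he).elim (charged_by_machine e)) hv
  rw [← Finset.sum_filter_add_sum_filter_not M ChargedByJob, two_nsmul]
  exact add_le_add sum_job sum_machine

end Charging

/-- Any maximal matching `X` in which every discarded edge is blocked by an
edge of at least its value is a 2-approximation to the maximum weight matching. -/
theorem stmt4 (n m : ℕ) (v : Fin n × Fin m → ℝ) (hv : ∀ e, 0 ≤ v e)
    (E X : Finset (Fin n × Fin m)) (hXE : X ⊆ E) (hXm : IsMatching X)
    (hcover : ∀ e ∈ E, e ∉ X → ∃ e' ∈ X, (e'.1 = e.1 ∨ e'.2 = e.2) ∧ v e ≤ v e')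
    (M : Finset (Fin n × Fin m)) (hM : IsMatching M) (hME : M ⊆ E) :
    ∑ e ∈ M, v e ≤ 2 * ∑ e ∈ X, v e := by
  simpa only [nsmul_eq_mul, Nat.cast_ofNat] using stmt4_general (fun e _ ↦ hv e)
    (fun e he ↦ hcover e (hME he)) hM.injOn_fst_s4 hM.injOn_snd
end

section
/- Fix numbers of jobs n and machines m, values v : Fin n → ℝ with v ≥ 0, sizes s : Fin n → ℝ with s > 0, capacities c : Fin m → ℝ with c ≥ 0, and a linear order ≺ on the set of assignments x : Fin n → Option (Fin m). Let E be an edge set, i a job, E'_i a set of pairs with first coordinate i, and E' = (E \ E_i) ∪ E'_i. Suppose x is a welfare-maximizing feasible assignment for MKP[E] that is ≺-least among all welfare-maximizing feasible assignments for MKP[E], and x' is a welfare-maximizing feasible assignment for MKP[E'] that is ≺-least among all welfare-maximizing feasible assignments for MKP[E']. If there exists a machine j with (i,j) ∈ E and x'(i) = some j, then x(i) ≠ none. That is, the mechanism that finds the optimal integral solution to the multiple knapsack problem, breaking ties consistently via an arbitrary total order on assignments, is truthful in the private graph model. -/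
/-- Feasibility of an assignment for the multiple knapsack problem MKP[E]. -/
def MKPFeasible {n m : ℕ} (s : Fin n → ℝ) (c : Fin m → ℝ)
    (E : Finset (Fin n × Fin m)) (x : Fin n → Option (Fin m)) : Prop :=
  (∀ i j, x i = some j → (i, j) ∈ E) ∧
    ∀ j, ∑ i ∈ Finset.univ.filter (fun i => x i = some j), s i ≤ c j

/-- Welfare of an assignment in the multiple knapsack problem. -/
def MKPWelfare {n m : ℕ} (v : Fin n → ℝ) (x : Fin n → Option (Fin m)) : ℝ :=
  ∑ i ∈ Finset.univ.filter (fun i => x i ≠ none), v i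

/-!
The argument is independence of irrelevant alternatives. Suppose job `i` is left unassigned by the
truthful outcome `x`, but is assigned along one of its true edges by the outcome `x'` of a
misreport. The two reports differ only in the edges of `i`, and the capacity constraints do not
depend on the report, so each outcome is also feasible for the other report. Two tie-broken optima
that are both feasible for both reports coincide, so `x i = x' i`, a contradiction.
-/

section TieBreaking

variable {α β : Type*}

/-- The outcome of an optimal mechanism with tie-breaking: `a` maximizes the objective `w` on `S`,
and it is `r`-related to every other maximizer. Only distinct maximizers are compared, so `r` may
be a strict or a non-strict order. -/
structure IsTieBrokenMaxOn [Preorder β] (r : α → α → Prop) (w : α → β) (S : Set α) (a : α) :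
    Prop where
  mem : a ∈ S
  isMaxOn : IsMaxOn w S a
  rel_of_eq : ∀ b ∈ S, w b = w a → b ≠ a → r a b

theorem IsTieBrokenMaxOn.eq_of_mem_of_mem [PartialOrder β] {r : α → α → Prop} [Std.Antisymm r]
    {w : α → β} {S T : Set α} {a b : α} (ha : IsTieBrokenMaxOn r w S a)
    (hb : IsTieBrokenMaxOn r w T b) (haT : a ∈ T) (hbS : b ∈ S) : a = b := by
  have hw : w a = w b := le_antisymm (hb.isMaxOn haT) (ha.isMaxOn hbS)
  by_contra hab
  exact hab (antisymm (ha.rel_of_eq b hbS hw.symm (Ne.symm hab)) (hb.rel_of_eq a haT hw hab))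

end TieBreaking

section Edges

variable {ι κ : Type*}

/-- The compatibility of a partial assignment of jobs to machines with an edge set: jobs are only
assigned along edges of `E`. It is the part of feasibility that depends on the reported graph. -/
def RespectsEdges (E : Set (ι × κ)) (x : ι → Option κ) : Prop :=
  ∀ i j, x i = some j → (i, j) ∈ E

theorem RespectsEdges.of_subset_off {E E' : Set (ι × κ)} {x : ι → Option κ} {i : ι}
    (hx : RespectsEdges E x) (hE : ∀ k ≠ i, ∀ j, (k, j) ∈ E → (k, j) ∈ E')
    (hi : ∀ j, x i = some j → (i, j) ∈ E') : RespectsEdges E' x := by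
  intro k j hkj
  obtain rfl | hk := eq_or_ne k i
  · exact hi j hkj
  · exact hE k hk j (hx k j hkj)

end Edges

theorem mem_sdiff_filter_union_iff {α : Type*} [DecidableEq α] {p : α → Prop}
    [DecidablePred p] {s t : Finset α} {a : α} (ht : ∀ b ∈ t, p b) (ha : ¬p a) :
    a ∈ (s \ s.filter p) ∪ t ↔ a ∈ s := by
  have hat : a ∉ t := fun h ↦ ha (ht a h)
  simp [ha, hat]

theorem stmt5_general {ι κ β : Type*} [PartialOrder β]
    {r : (ι → Option κ) → (ι → Option κ) → Prop} [Std.Antisymm r] {w : (ι → Option κ) → β}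
    {P : Set (ι → Option κ)} {E E' : Set (ι × κ)} {i : ι} {x x' : ι → Option κ}
    (hE : ∀ k ≠ i, ∀ j, (k, j) ∈ E' ↔ (k, j) ∈ E)
    (hx : IsTieBrokenMaxOn r w ({y | RespectsEdges E y} ∩ P) x)
    (hx' : IsTieBrokenMaxOn r w ({y | RespectsEdges E' y} ∩ P) x')
    (hj : ∃ j, (i, j) ∈ E ∧ x' i = some j) : x i ≠ none := by
  intro hxi
  obtain ⟨j, hjE, hx'i⟩ := hj
  have hxE' : RespectsEdges E' x :=
    hx.mem.1.of_subset_off (fun k hk j ↦ (hE k hk j).2) (by simp [hxi])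
  have hx'E : RespectsEdges E x' :=
    hx'.mem.1.of_subset_off (fun k hk j ↦ (hE k hk j).1) (by simpa [hx'i] using hjE)
  have hxx' : x = x' := hx.eq_of_mem_of_mem hx' ⟨hxE', hx.mem.2⟩ ⟨hx'E, hx'.mem.2⟩
  simp [← hxx', hxi] at hx'i

/-- Solving MKP optimally, breaking ties via an arbitrary total order on
assignments, is truthful in the private graph model. -/
theorem stmt5 (n m : ℕ) (v s : Fin n → ℝ) (c : Fin m → ℝ)
    (hv : ∀ i, 0 ≤ v i) (hs : ∀ i, 0 < s i) (hc : ∀ j, 0 ≤ c j)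
    (lt : (Fin n → Option (Fin m)) → (Fin n → Option (Fin m)) → Prop)
    (hlt : IsStrictTotalOrder (Fin n → Option (Fin m)) lt)
    (E Ei' : Finset (Fin n × Fin m)) (i : Fin n)
    (hEi' : ∀ e ∈ Ei', e.1 = i)
    (E' : Finset (Fin n × Fin m))
    (hE' : E' = (E \ E.filter (fun e => e.1 = i)) ∪ Ei')
    (x x' : Fin n → Option (Fin m))
    (hx : MKPFeasible s c E x)
    (hxopt : ∀ y, MKPFeasible s c E y → MKPWelfare v y ≤ MKPWelfare v x)
    (hxmin : ∀ y, MKPFeasible s c E y → MKPWelfare v y = MKPWelfare v x → y ≠ x → lt x y)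
    (hx' : MKPFeasible s c E' x')
    (hx'opt : ∀ y, MKPFeasible s c E' y → MKPWelfare v y ≤ MKPWelfare v x')
    (hx'min : ∀ y, MKPFeasible s c E' y → MKPWelfare v y = MKPWelfare v x' → y ≠ x' → lt x' y)
    (hj : ∃ j, (i, j) ∈ E ∧ x' i = some j) :
    x i ≠ none := by
  subst hE'
  exact stmt5_general (P := {y | ∀ j, ∑ k with y k = some j, s k ≤ c j})
    (fun _ hk _ ↦ mem_sdiff_filter_union_iff hEi' hk)
    ⟨hx, isMaxOn_iff.2 hxopt, hxmin⟩ ⟨hx', isMaxOn_iff.2 hx'opt, hx'min⟩ hj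
end

section
/- Fix numbers of jobs n and machines m, values v : Fin n → ℝ with v ≥ 0, sizes s : Fin n → ℝ with s > 0, capacities c : Fin m → ℝ with c ≥ 0, and an enumeration e : Fin (n·m) ≃ (Fin n × Fin m) of all job–machine pairs. Call a feasible solution x of the MKP[E] LP lexicographically minimal among optimal solutions if x maximizes welfare among feasible solutions of the MKP[E] LP and, for every other welfare-maximizing feasible solution y ≠ x, at the least index k with x(e(k)) ≠ y(e(k)) one has x(e(k)) < y(e(k)). Let E be an edge set, i a job, E'_i a set of pairs with first coordinate i, and E' = (E \ E_i) ∪ E'_i. If x is lexicographically minimal among optimal solutions of the MKP[E] LP and x' is lexicographically minimal among optimal solutions of the MKP[E'] LP, then v(i) · ∑_{j : (i,j) ∈ E} x(i,j) ≥ v(i) · ∑_{j : (i,j) ∈ E} x'(i,j). That is, solving the fractional multiple knapsack LP optimally with consistent lexicographic tie-breaking is a truthful fractional mechanism. -/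
/-- Feasibility for the MKP[E] LP. -/
def MKPLPFeasible {n m : ℕ} (s : Fin n → ℝ) (c : Fin m → ℝ)
    (E : Finset (Fin n × Fin m)) (x : Fin n × Fin m → ℝ) : Prop :=
  (∀ p, 0 ≤ x p ∧ x p ≤ 1) ∧ (∀ p, p ∉ E → x p = 0) ∧
    (∀ i, ∑ j, x (i, j) ≤ 1) ∧ (∀ j, ∑ i, s i * x (i, j) ≤ c j)

/-- Welfare of a fractional MKP solution. -/
def MKPLPWelfare {n m : ℕ} (v : Fin n → ℝ) (x : Fin n × Fin m → ℝ) : ℝ :=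
  ∑ p : Fin n × Fin m, v p.1 * x p

/-- `x` is lexicographically minimal among optimal solutions of the MKP[E] LP,
with respect to the enumeration `e` of job–machine pairs. -/
def MKPLexMinOptimal {n m : ℕ} (s : Fin n → ℝ) (v : Fin n → ℝ) (c : Fin m → ℝ)
    (e : Fin (n * m) ≃ (Fin n × Fin m)) (E : Finset (Fin n × Fin m))
    (x : Fin n × Fin m → ℝ) : Prop :=
  MKPLPFeasible s c E x ∧
    (∀ y, MKPLPFeasible s c E y → MKPLPWelfare v y ≤ MKPLPWelfare v x) ∧
    ∀ y, MKPLPFeasible s c E y → MKPLPWelfare v y = MKPLPWelfare v x → y ≠ x →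
      ∀ k : Fin (n * m), (∀ l, l < k → x (e l) = y (e l)) → x (e k) ≠ y (e k) →
        x (e k) < y (e k)

/-!
Suppose job `i` receives strictly more through `E` in `x'` than in `x`, so that `x` does not assign
`i` completely. Let `Δ` be `x' - x` on `E`, read as a flow of size from jobs to machines, and look
at the vertices reachable from `i` along `Δ`. A small amount of size sent along such a route can be
added to `x` and subtracted from `x'`. If both modifications were feasible, the two optimality
conditions would force the route to be welfare-neutral, and the two lexicographic conditions would
disagree about the sign of its first nonzero entry. Hence every reachable machine is saturated by
`x` and every reachable job other than `i` is completely assigned by `x'`. So no reachable vertex is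
a net receiver of `Δ` and `i` is a strict sender, although `Δ` does not leave the reachable set: a
contradiction.
-/

open Filter Sum Topology

section NetOutflow

variable {ι κ : Type*} [Fintype ι] [Fintype κ]

/-- The net outflow at each job and machine of `g`, read as a flow on the bipartite graph of jobs
and machines: the entry `g (a, k)` carries the amount `s a * g (a, k)` from job `a` to machine `k`,
so that machines see their load with the opposite sign. -/
def netOutflow (s : ι → ℝ) (g : ι × κ → ℝ) : ι ⊕ κ → ℝ :=
  Sum.elim (fun a => s a * ∑ k, g (a, k)) (fun k => -∑ a, s a * g (a, k))

variable {s : ι → ℝ} {g Δ : ι × κ → ℝ}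

@[simp]
lemma netOutflow_inl (s : ι → ℝ) (g : ι × κ → ℝ) (a : ι) :
    netOutflow s g (inl a) = s a * ∑ k, g (a, k) := rfl

@[simp]
lemma netOutflow_inr (s : ι → ℝ) (g : ι × κ → ℝ) (k : κ) :
    netOutflow s g (inr k) = -∑ a, s a * g (a, k) := rfl

@[simp]
lemma netOutflow_zero (s : ι → ℝ) : netOutflow s (0 : ι × κ → ℝ) = 0 := by
  ext (a | k) <;> simp

lemma netOutflow_add (s : ι → ℝ) (f g : ι × κ → ℝ) :
    netOutflow s (f + g) = netOutflow s f + netOutflow s g := by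
  ext (a | k) <;> simp [mul_add, Finset.sum_add_distrib, add_comm]

lemma netOutflow_sub (s : ι → ℝ) (f g : ι × κ → ℝ) :
    netOutflow s (f - g) = netOutflow s f - netOutflow s g :=
  eq_sub_of_add_eq (by rw [← netOutflow_add, sub_add_cancel])

lemma netOutflow_single [DecidableEq ι] [DecidableEq κ] {a : ι} (ha : s a ≠ 0) (k : κ) :
    netOutflow s (Pi.single (a, k) (s a)⁻¹) = Pi.single (inl a) 1 - Pi.single (inr k) 1 := by
  ext (b | l)
  · by_cases hb : b = a
    · subst hb
      simp [Pi.single_apply, ha]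
    · simp [hb]
  · by_cases hl : l = k <;> simp [Pi.single_apply, hl, ha]

lemma sum_netOutflow_eq [DecidableEq ι] [DecidableEq κ] (s : ι → ℝ) (g : ι × κ → ℝ)
    (S : Finset (ι ⊕ κ)) :
    ∑ w ∈ S, netOutflow s g w =
      ∑ p : ι × κ, s p.1 * g p *
        ((if inl p.1 ∈ S then 1 else 0) - (if inr p.2 ∈ S then 1 else 0)) := by
  have jobs : ∑ a, (if inl a ∈ S then netOutflow s g (inl a) else 0) =
      ∑ p : ι × κ, s p.1 * g p * (if inl p.1 ∈ S then 1 else 0) := by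
    rw [Fintype.sum_prod_type]
    refine Finset.sum_congr rfl fun a _ => ?_
    split_ifs <;> simp [Finset.mul_sum]
  have machines : ∑ k, (if inr k ∈ S then netOutflow s g (inr k) else 0) =
      -∑ p : ι × κ, s p.1 * g p * (if inr p.2 ∈ S then 1 else 0) := by
    rw [Fintype.sum_prod_type_right, ← Finset.sum_neg_distrib]
    refine Finset.sum_congr rfl fun k _ => ?_
    split_ifs <;> simp
  simp only [mul_sub, Finset.sum_sub_distrib]
  rw [← Fintype.sum_ite_mem, Fintype.sum_sum_type, jobs, machines, sub_eq_add_neg]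

lemma sum_netOutflow_nonpos_of_closed (hs : ∀ a, 0 ≤ s a) {S : Finset (ι ⊕ κ)}
    (hpos : ∀ a k, 0 < g (a, k) → inl a ∈ S → inr k ∈ S)
    (hneg : ∀ a k, g (a, k) < 0 → inr k ∈ S → inl a ∈ S) :
    ∑ w ∈ S, netOutflow s g w ≤ 0 := by
  classical
  rw [sum_netOutflow_eq]
  refine Finset.sum_nonpos fun ⟨a, k⟩ _ => ?_
  by_cases ha : inl a ∈ S <;> by_cases hk : inr k ∈ S
  · simp [ha, hk]
  · have : g (a, k) ≤ 0 := not_lt.mp fun h => hk (hpos a k h ha)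
    simpa [ha, hk] using mul_nonpos_of_nonneg_of_nonpos (hs a) this
  · have : 0 ≤ g (a, k) := not_lt.mp fun h => ha (hneg a k h hk)
    simpa [ha, hk] using mul_nonneg (hs a) this
  · simp [ha, hk]

variable [DecidableEq ι] [DecidableEq κ]

/-- `g` carries one unit of size from job `i` to the vertex `w` along `Δ`: it has the signs of `Δ`
wherever it does not vanish, and it never returns to `i`. The last condition keeps it off the pairs
of `i` that `x` uses but that are no longer available to `x'`, where `Δ` is negative. -/
structure IsUnitFlow (s : ι → ℝ) (Δ : ι × κ → ℝ) (i : ι) (w : ι ⊕ κ) (g : ι × κ → ℝ) :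
    Prop where
  pos : ∀ p, 0 < g p → 0 < Δ p
  neg : ∀ p, g p < 0 → Δ p < 0 ∧ p.1 ≠ i
  netOutflow_eq : netOutflow s g = Pi.single (inl i) 1 - Pi.single w 1

/-- The vertex `w` can be reached from job `i` along `Δ`. Reachability is witnessed by a flow
rather than by a path, since only the flow is used to modify solutions. -/
def FlowReachable (s : ι → ℝ) (Δ : ι × κ → ℝ) (i : ι) (w : ι ⊕ κ) : Prop :=
  ∃ g, IsUnitFlow s Δ i w g

variable {i a : ι} {k : κ} {u w : ι ⊕ κ}

lemma IsUnitFlow.eq_source (hg : IsUnitFlow s Δ i w g) (hu : 0 < netOutflow s g u) :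
    u = inl i := by
  by_contra hne
  have : (0 : ℝ) ≤ (Pi.single w 1 : ι ⊕ κ → ℝ) u :=
    (Pi.single_nonneg (α := fun _ => ℝ)).mpr zero_le_one u
  rw [hg.netOutflow_eq, Pi.sub_apply, Pi.single_eq_of_ne hne] at hu
  linarith

lemma IsUnitFlow.eq_target (hg : IsUnitFlow s Δ i w g) (hu : netOutflow s g u < 0) :
    u = w := by
  by_contra hne
  have : (0 : ℝ) ≤ (Pi.single (inl i) 1 : ι ⊕ κ → ℝ) u :=
    (Pi.single_nonneg (α := fun _ => ℝ)).mpr zero_le_one u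
  rw [hg.netOutflow_eq, Pi.sub_apply, Pi.single_eq_of_ne hne] at hu
  linarith

lemma FlowReachable.refl (s : ι → ℝ) (Δ : ι × κ → ℝ) (i : ι) :
    FlowReachable s Δ i (inl i) :=
  ⟨0, by simp, by simp, by simp⟩

lemma FlowReachable.machine_of_pos (hs : 0 < s a) (h : FlowReachable s Δ i (inl a))
    (hΔ : 0 < Δ (a, k)) : FlowReachable s Δ i (inr k) := by
  obtain ⟨g, hg⟩ := h
  have hle : g ≤ g + Pi.single (a, k) (s a)⁻¹ :=
    le_add_of_nonneg_right (Pi.single_nonneg.mpr (inv_nonneg.mpr hs.le))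
  refine ⟨g + Pi.single (a, k) (s a)⁻¹, fun p hp => ?_, fun p hp => ?_, ?_⟩
  · by_cases h : p = (a, k)
    · rwa [h]
    · exact hg.pos p (by simpa [h] using hp)
  · exact hg.neg p ((hle p).trans_lt hp)
  · rw [netOutflow_add, hg.netOutflow_eq, netOutflow_single hs.ne', sub_add_sub_cancel]

lemma FlowReachable.job_of_neg (hs : 0 < s a) (h : FlowReachable s Δ i (inr k))
    (hΔ : Δ (a, k) < 0) : FlowReachable s Δ i (inl a) := by
  by_cases hai : a = i
  · rw [hai]
    exact .refl s Δ i
  obtain ⟨g, hg⟩ := h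
  have hle : g - Pi.single (a, k) (s a)⁻¹ ≤ g :=
    sub_le_self g (Pi.single_nonneg.mpr (inv_nonneg.mpr hs.le))
  refine ⟨g - Pi.single (a, k) (s a)⁻¹, fun p hp => ?_, fun p hp => ?_, ?_⟩
  · exact hg.pos p (hp.trans_le (hle p))
  · by_cases h : p = (a, k)
    · exact h ▸ ⟨hΔ, hai⟩
    · exact hg.neg p (by simpa [h] using hp)
  · rw [netOutflow_sub, hg.netOutflow_eq, netOutflow_single hs.ne', sub_sub_sub_cancel_right]

lemma sum_netOutflow_flowReachable_nonpos (hs : ∀ a, 0 < s a) (Δ : ι × κ → ℝ) (i : ι)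
    [DecidablePred (FlowReachable s Δ i)] :
    ∑ w with FlowReachable s Δ i w, netOutflow s Δ w ≤ 0 := by
  refine sum_netOutflow_nonpos_of_closed (fun a => (hs a).le) ?_ ?_ <;>
    simp only [Finset.mem_filter_univ]
  · exact fun a k hΔ ha => ha.machine_of_pos (hs a) hΔ
  · exact fun a k hΔ hk => hk.job_of_neg (hs a) hΔ

end NetOutflow

lemma eventually_add_mul_le {a b u : ℝ} (h : a ≤ u) (hb : 0 < b → a < u) :
    ∀ᶠ t in 𝓝[>] (0 : ℝ), a + t * b ≤ u := by
  by_cases hb' : 0 < b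
  · have htend : Tendsto (fun t : ℝ => a + t * b) (𝓝[>] 0) (𝓝 a) :=
      tendsto_nhdsWithin_of_tendsto_nhds (Continuous.tendsto' (by fun_prop) _ _ (by simp))
    exact htend.eventually_le_const (hb hb')
  · filter_upwards [self_mem_nhdsWithin] with t (ht : 0 < t)
    linarith [mul_nonpos_of_nonneg_of_nonpos ht.le (not_lt.mp hb')]

section MKP

variable {n m : ℕ} {s v : Fin n → ℝ} {c : Fin m → ℝ} {e : Fin (n * m) ≃ (Fin n × Fin m)}
  {E E' : Finset (Fin n × Fin m)} {x x' g d : Fin n × Fin m → ℝ} {i : Fin n}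

lemma MKPLPFeasible.eventually_add_smul (hx : MKPLPFeasible s c E x)
    (hsupp : ∀ p ∉ E, g p = 0) (hneg : ∀ p, g p < 0 → 0 < x p)
    (hjob : ∀ r, 0 < ∑ j, g (r, j) → ∑ j, x (r, j) < 1)
    (hmachine : ∀ j, 0 < ∑ r, s r * g (r, j) → ∑ r, s r * x (r, j) < c j) :
    ∀ᶠ t in 𝓝[>] (0 : ℝ), MKPLPFeasible s c E (x + t • g) := by
  obtain ⟨hbox, hxsupp, hrow, hcol⟩ := hx
  have hlower : ∀ᶠ t in 𝓝[>] (0 : ℝ), ∀ p, -x p + t * -g p ≤ 0 :=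
    eventually_all.mpr fun p => eventually_add_mul_le (neg_nonpos.mpr (hbox p).1)
      fun h => neg_lt_zero.mpr (hneg p (neg_pos.mp h))
  have hrows : ∀ᶠ t in 𝓝[>] (0 : ℝ), ∀ r, ∑ j, x (r, j) + t * ∑ j, g (r, j) ≤ 1 :=
    eventually_all.mpr fun r => eventually_add_mul_le (hrow r) (hjob r)
  have hcols : ∀ᶠ t in 𝓝[>] (0 : ℝ), ∀ j,
      ∑ r, s r * x (r, j) + t * ∑ r, s r * g (r, j) ≤ c j :=
    eventually_all.mpr fun j => eventually_add_mul_le (hcol j) (hmachine j)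
  filter_upwards [hlower, hrows, hcols] with t hlower hrows hcols
  have hnonneg : ∀ p, 0 ≤ (x + t • g) p := fun p => by
    have := hlower p
    rw [Pi.add_apply, Pi.smul_apply, smul_eq_mul]
    linarith
  have hrow_le : ∀ r, ∑ j, (x + t • g) (r, j) ≤ 1 := fun r => by
    simpa [Finset.sum_add_distrib, Finset.mul_sum] using hrows r
  refine ⟨fun p => ⟨hnonneg p, ?_⟩, fun p hp => by simp [hxsupp p hp, hsupp p hp], hrow_le,
    fun j => ?_⟩
  · exact (Finset.single_le_sum (f := fun j => (x + t • g) (p.1, j))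
      (fun j _ => hnonneg (p.1, j)) (Finset.mem_univ p.2)).trans (hrow_le p.1)
  · simpa [mul_add, Finset.sum_add_distrib, Finset.mul_sum, mul_left_comm] using hcols j

lemma MKPLPWelfare_add (v : Fin n → ℝ) (x y : Fin n × Fin m → ℝ) :
    MKPLPWelfare v (x + y) = MKPLPWelfare v x + MKPLPWelfare v y := by
  simp [MKPLPWelfare, mul_add, Finset.sum_add_distrib]

lemma MKPLPWelfare_neg (v : Fin n → ℝ) (x : Fin n × Fin m → ℝ) :
    MKPLPWelfare v (-x) = -MKPLPWelfare v x := by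
  simp [MKPLPWelfare]

namespace MKPLexMinOptimal

lemma welfare_nonpos (hx : MKPLexMinOptimal s v c e E x) (hd : MKPLPFeasible s c E (x + d)) :
    MKPLPWelfare v d ≤ 0 := by
  have := hx.2.1 _ hd
  rwa [MKPLPWelfare_add, add_le_iff_nonpos_right] at this

lemma pos_of_minimal_ne_zero (hx : MKPLexMinOptimal s v c e E x)
    (hd : MKPLPFeasible s c E (x + d)) (hw : MKPLPWelfare v d = 0) {k : Fin (n * m)}
    (hk : Minimal (fun l => d (e l) ≠ 0) k) : 0 < d (e k) := by
  have hne : d (e k) ≠ 0 := hk.prop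
  have hbefore : ∀ l < k, d (e l) = 0 := fun l hl => not_not.mp (hk.not_prop_of_lt hl)
  simpa using hx.2.2 (x + d) hd (by rw [MKPLPWelfare_add, hw, add_zero])
    (fun h => hne (by simpa using congrFun h (e k))) k (fun l hl => by simp [hbefore l hl])
    (by simpa using hne)

lemma eq_zero_of_exchange (hx : MKPLexMinOptimal s v c e E x)
    (hx' : MKPLexMinOptimal s v c e E' x') (hd : MKPLPFeasible s c E (x + d))
    (hd' : MKPLPFeasible s c E' (x' + -d)) : d = 0 := by
  by_contra hne
  have hw : MKPLPWelfare v d = 0 := by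
    have := hx'.welfare_nonpos hd'
    rw [MKPLPWelfare_neg] at this
    linarith [hx.welfare_nonpos hd]
  obtain ⟨p, hp⟩ := Function.ne_iff.mp hne
  obtain ⟨k, hk⟩ := exists_minimal_of_wellFoundedLT (fun l => d (e l) ≠ 0)
    ⟨e.symm p, by simpa using hp⟩
  have hpos : 0 < d (e k) := hx.pos_of_minimal_ne_zero hd hw hk
  have hneg : 0 < (-d) (e k) :=
    hx'.pos_of_minimal_ne_zero hd' (by rw [MKPLPWelfare_neg, hw, neg_zero]) (by simpa using hk)
  exact lt_asymm hpos (neg_pos.mp hneg)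

end MKPLexMinOptimal

/-- The change from `x` to `x'` on the pairs in `E`. Pairs outside `E` are ignored even where `x'`
uses them, since only the pairs in `E` count towards the value of the truthful job. -/
noncomputable def changeOn (E : Finset (Fin n × Fin m)) (x x' : Fin n × Fin m → ℝ) :
    Fin n × Fin m → ℝ :=
  (E : Set (Fin n × Fin m)).indicator (x' - x)

lemma changeOn_pos_iff {p : Fin n × Fin m} : 0 < changeOn E x x' p ↔ p ∈ E ∧ x p < x' p := by
  by_cases hp : p ∈ E <;> simp [changeOn, hp]

lemma changeOn_neg_iff {p : Fin n × Fin m} : changeOn E x x' p < 0 ↔ p ∈ E ∧ x' p < x p := by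
  by_cases hp : p ∈ E <;> simp [changeOn, hp]

lemma changeOn_apply_of_mem_iff (hx : MKPLPFeasible s c E x) (hx' : MKPLPFeasible s c E' x')
    {p : Fin n × Fin m} (hp : p ∈ E' ↔ p ∈ E) : changeOn E x x' p = x' p - x p := by
  by_cases h : p ∈ E
  · simp [changeOn, h]
  · simp [changeOn, h, hx.2.1 p h, hx'.2.1 p (hp.not.mpr h)]

lemma changeOn_le (hx : MKPLPFeasible s c E x) (hx' : MKPLPFeasible s c E' x')
    (p : Fin n × Fin m) : changeOn E x x' p ≤ x' p - x p := by
  by_cases h : p ∈ E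
  · simp [changeOn, h]
  · simpa [changeOn, h, hx.2.1 p h] using (hx'.1 p).1

lemma sum_changeOn_row (E : Finset (Fin n × Fin m)) (x x' : Fin n × Fin m → ℝ) (i : Fin n) :
    ∑ j, changeOn E x x' (i, j) =
      ∑ j with (i, j) ∈ E, x' (i, j) - ∑ j with (i, j) ∈ E, x (i, j) := by
  simp [changeOn, Set.indicator_apply, Finset.sum_filter, ← Finset.sum_sub_distrib,
    ite_sub_ite]

lemma IsUnitFlow.target_eq_source {w : Fin n ⊕ Fin m} (hs : ∀ r, 0 < s r)
    (hE : ∀ p : Fin n × Fin m, p.1 ≠ i → (p ∈ E' ↔ p ∈ E))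
    (hx : MKPLexMinOptimal s v c e E x) (hx' : MKPLexMinOptimal s v c e E' x')
    (hg : IsUnitFlow s (changeOn E x x') i w g) (hi : ∑ j, x (i, j) < 1)
    (hjob : ∀ r, w = inl r → ∑ j, x' (r, j) < 1)
    (hmachine : ∀ k, w = inr k → ∑ r, s r * x (r, k) < c k) : w = inl i := by
  have hpos : ∀ p, 0 < g p → p ∈ E ∧ x p < x' p := fun p hp => changeOn_pos_iff.mp (hg.pos p hp)
  have hneg : ∀ p, g p < 0 → p ∈ E ∧ x' p < x p := fun p hp =>
    changeOn_neg_iff.mp (hg.neg p hp).1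
  have hadd : ∀ᶠ t in 𝓝[>] (0 : ℝ), MKPLPFeasible s c E (x + t • g) := by
    refine hx.1.eventually_add_smul (fun p hp => ?_) (fun p hp => ?_) (fun r hr => ?_)
      (fun k hk => ?_)
    · exact le_antisymm (not_lt.mp fun h => hp (hpos p h).1) (not_lt.mp fun h => hp (hneg p h).1)
    · exact (hx'.1.1 p).1.trans_lt (hneg p hp).2
    · rwa [inl_injective (hg.eq_source (u := inl r) (mul_pos (hs r) hr))]
    · exact hmachine k (hg.eq_target (u := inr k) (neg_neg_of_pos hk)).symm
  have hsub : ∀ᶠ t in 𝓝[>] (0 : ℝ), MKPLPFeasible s c E' (x' + t • -g) := by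
    refine hx'.1.eventually_add_smul (fun p hp => ?_) (fun p hp => ?_) (fun r hr => ?_)
      (fun k hk => ?_)
    · refine neg_eq_zero.mpr (le_antisymm (not_lt.mp fun h => ?_) (not_lt.mp fun h => ?_))
      · exact ((hx.1.1 p).1.trans_lt (hpos p h).2).ne' (hx'.1.2.1 p hp)
      · exact hp ((hE p (hg.neg p h).2).mpr (hneg p h).1)
    · exact (hx.1.1 p).1.trans_lt (hpos p (neg_neg_iff_pos.mp hp)).2
    · have hr' : ∑ j, g (r, j) < 0 := by simpa using hr
      exact hjob r (hg.eq_target (u := inl r) (mul_neg_of_pos_of_neg (hs r) hr')).symm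
    · have hk' : 0 < netOutflow s g (inr k) := by simpa using hk
      exact absurd (hg.eq_source hk') inr_ne_inl
  obtain ⟨t, ⟨hft, hft'⟩, ht : 0 < t⟩ := ((hadd.and hsub).and self_mem_nhdsWithin).exists
  have hg0 : g = 0 := (smul_eq_zero.mp
    (hx.eq_zero_of_exchange hx' hft (by rwa [← smul_neg]))).resolve_left ht.ne'
  by_contra hw
  simpa [hg0, Pi.single_apply, Ne.symm hw] using congrFun hg.netOutflow_eq (inl i)

lemma FlowReachable.sum_job_eq_one (hs : ∀ r, 0 < s r)
    (hE : ∀ p : Fin n × Fin m, p.1 ≠ i → (p ∈ E' ↔ p ∈ E))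
    (hx : MKPLexMinOptimal s v c e E x) (hx' : MKPLexMinOptimal s v c e E' x')
    (hi : ∑ j, x (i, j) < 1) {r : Fin n} (hr : r ≠ i)
    (h : FlowReachable s (changeOn E x x') i (inl r)) : ∑ j, x' (r, j) = 1 := by
  obtain ⟨g, hg⟩ := h
  refine (hx'.1.2.2.1 r).eq_of_not_lt fun hlt => hr (inl_injective (β := Fin m) ?_)
  exact hg.target_eq_source hs hE hx hx' hi (fun a ha => inl_injective ha ▸ hlt) (by simp)

lemma FlowReachable.load_eq_capacity (hs : ∀ r, 0 < s r)
    (hE : ∀ p : Fin n × Fin m, p.1 ≠ i → (p ∈ E' ↔ p ∈ E))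
    (hx : MKPLexMinOptimal s v c e E x) (hx' : MKPLexMinOptimal s v c e E' x')
    (hi : ∑ j, x (i, j) < 1) {k : Fin m}
    (h : FlowReachable s (changeOn E x x') i (inr k)) : ∑ r, s r * x (r, k) = c k := by
  obtain ⟨g, hg⟩ := h
  refine (hx.1.2.2.2 k).eq_of_not_lt fun hlt => inr_ne_inl (a := i) (b := k) ?_
  exact hg.target_eq_source hs hE hx hx' hi (by simp) (fun j hj => inr_injective hj ▸ hlt)

lemma FlowReachable.netOutflow_changeOn_nonneg (hs : ∀ r, 0 < s r)
    (hE : ∀ p : Fin n × Fin m, p.1 ≠ i → (p ∈ E' ↔ p ∈ E))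
    (hx : MKPLexMinOptimal s v c e E x) (hx' : MKPLexMinOptimal s v c e E' x')
    (hi : ∑ j, x (i, j) < 1) {w : Fin n ⊕ Fin m} (hw : w ≠ inl i)
    (h : FlowReachable s (changeOn E x x') i w) : 0 ≤ netOutflow s (changeOn E x x') w := by
  rcases w with r | k
  · have hr : r ≠ i := fun h => hw (congrArg inl h)
    have hrow : ∑ j, changeOn E x x' (r, j) = ∑ j, x' (r, j) - ∑ j, x (r, j) := by
      rw [← Finset.sum_sub_distrib]
      exact Finset.sum_congr rfl fun j _ => changeOn_apply_of_mem_iff hx.1 hx'.1 (hE (r, j) hr)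
    rw [netOutflow_inl, hrow, h.sum_job_eq_one hs hE hx hx' hi hr]
    exact mul_nonneg (hs r).le (sub_nonneg.mpr (hx.1.2.2.1 r))
  · rw [netOutflow_inr, neg_nonneg]
    calc ∑ r, s r * changeOn E x x' (r, k)
        ≤ ∑ r, s r * (x' (r, k) - x (r, k)) := Finset.sum_le_sum fun r _ =>
          mul_le_mul_of_nonneg_left (changeOn_le hx.1 hx'.1 (r, k)) (hs r).le
      _ = ∑ r, s r * x' (r, k) - c k := by
          simp only [mul_sub, Finset.sum_sub_distrib, h.load_eq_capacity hs hE hx hx' hi]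
      _ ≤ 0 := sub_nonpos.mpr (hx'.1.2.2.2 k)

lemma MKPLPFeasible.sum_filter_mem_eq (hx : MKPLPFeasible s c E x) (i : Fin n) :
    ∑ j with (i, j) ∈ E, x (i, j) = ∑ j, x (i, j) :=
  Finset.sum_filter_of_ne fun j _ hj => by_contra fun h => hj (hx.2.1 (i, j) h)

lemma MKPLPFeasible.sum_filter_le_one (hx : MKPLPFeasible s c E x) (i : Fin n)
    (P : Fin m → Prop) [DecidablePred P] : ∑ j with P j, x (i, j) ≤ 1 :=
  (Finset.sum_le_univ_sum_of_nonneg fun j => (hx.1 (i, j)).1).trans (hx.2.2.1 i)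

theorem stmt6_general (hs : ∀ r, 0 < s r)
    (hE : ∀ p : Fin n × Fin m, p.1 ≠ i → (p ∈ E' ↔ p ∈ E))
    (hx : MKPLexMinOptimal s v c e E x) (hx' : MKPLexMinOptimal s v c e E' x') :
    ∑ j with (i, j) ∈ E, x' (i, j) ≤ ∑ j with (i, j) ∈ E, x (i, j) := by
  classical
  by_contra! hlt
  have hi : ∑ j, x (i, j) < 1 :=
    hx.1.sum_filter_mem_eq i ▸ hlt.trans_le (hx'.1.sum_filter_le_one i _)
  have hsource : 0 < netOutflow s (changeOn E x x') (inl i) := by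
    rw [netOutflow_inl, sum_changeOn_row]
    exact mul_pos (hs i) (sub_pos.mpr hlt)
  refine (sum_netOutflow_flowReachable_nonpos hs (changeOn E x x') i).not_gt
    (Finset.sum_pos' (fun w hw => ?_) ⟨inl i, ?_, hsource⟩)
  · rw [Finset.mem_filter_univ] at hw
    by_cases hwi : w = inl i
    · exact hwi ▸ hsource.le
    · exact hw.netOutflow_changeOn_nonneg hs hE hx hx' hi hwi
  · exact (Finset.mem_filter_univ _).mpr (.refl _ _ i)

end MKP

/-- Solving the fractional multiple knapsack LP optimally with consistent
lexicographic tie-breaking is a truthful fractional mechanism. -/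
theorem stmt6 (n m : ℕ) (v s : Fin n → ℝ) (c : Fin m → ℝ)
    (hv : ∀ i, 0 ≤ v i) (hs : ∀ i, 0 < s i) (hc : ∀ j, 0 ≤ c j)
    (e : Fin (n * m) ≃ (Fin n × Fin m))
    (E Ei' : Finset (Fin n × Fin m)) (i : Fin n)
    (hEi' : ∀ q ∈ Ei', q.1 = i)
    (E' : Finset (Fin n × Fin m))
    (hE' : E' = (E \ E.filter (fun q => q.1 = i)) ∪ Ei')
    (x x' : Fin n × Fin m → ℝ)
    (hx : MKPLexMinOptimal s v c e E x)
    (hx' : MKPLexMinOptimal s v c e E' x') :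
    v i * ∑ j ∈ Finset.univ.filter (fun j => (i, j) ∈ E), x' (i, j)
      ≤ v i * ∑ j ∈ Finset.univ.filter (fun j => (i, j) ∈ E), x (i, j) := by
  have hE : ∀ p : Fin n × Fin m, p.1 ≠ i → (p ∈ E' ↔ p ∈ E) := fun p hp => by
    simp [hE', hp, mt (hEi' p) hp]
  exact mul_le_mul_of_nonneg_left (stmt6_general hs hE hx hx') (hv i)
end

section
/- Fix numbers of jobs n and machines m, values v : Fin n × Fin m → ℝ with v ≥ 0, sizes s : Fin n → ℝ with s > 0, capacities c : Fin m → ℝ with c ≥ 0, and an enumeration e : Fin (n·m) ≃ (Fin n × Fin m) such that the densities v(e(k))/s((e(k)).1) are non-increasing in k. Let E be an edge set and let x be a feasible solution of the SIGAP[E] LP that is lexicographically maximal: for every feasible solution y ≠ x of the SIGAP[E] LP, at the least index k with x(e(k)) ≠ y(e(k)) one has x(e(k)) > y(e(k)). Then for every feasible solution y of the SIGAP[E] LP, ∑_{(i,j)} v(i,j)·y(i,j) ≤ 2 · ∑_{(i,j)} v(i,j)·x(i,j). That is, the greedy algorithm that processes edges in decreasing order of value density, assigning as much of each job as possible, returns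 a 2-approximate solution to the SIGAP[E] LP. -/
/-- Feasibility for the SIGAP[E] LP (sizes independent of the machine). -/
def SIGAPLPFeasible {n m : ℕ} (s : Fin n → ℝ) (c : Fin m → ℝ)
    (E : Finset (Fin n × Fin m)) (x : Fin n × Fin m → ℝ) : Prop :=
  (∀ p, 0 ≤ x p ∧ x p ≤ 1) ∧ (∀ p, p ∉ E → x p = 0) ∧
    (∀ i, ∑ j, x (i, j) ≤ 1) ∧ (∀ j, ∑ i, s i * x (i, j) ≤ c j)

/-!
The proof is by dual fitting. If both the job and the machine of an edge `p ∈ E` had slack left by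
the part of `x` on edges up to `p`, then keeping that part, raising `x p` a little and discarding
all later edges would give a lexicographically larger feasible solution. So each edge of `E` has
its job or its machine filled by edges at least as dense as itself. Price job `i` at the welfare
`∑ j, v (i, j) * x (i, j)` and a unit of capacity of machine `j` at
`(∑ i, v (i, j) * x (i, j)) / c j`. A filled job or machine has earned at least the density of `p`
on all of its time or capacity, so these prices satisfy the dual constraint at `p`; and they cost
at most twice the welfare of `x`, once through the jobs and once through the machines.
-/

section

variable {n m : ℕ} {v x y : Fin n × Fin m → ℝ} {s : Fin n → ℝ} {c : Fin m → ℝ}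
  {E : Finset (Fin n × Fin m)} {p : Fin n × Fin m}

/-- The assignment `x` saturates the edge `p`: it uses up the job or the machine of `p`, so that
`x p` cannot be raised with everything else kept. -/
def Saturates (s : Fin n → ℝ) (c : Fin m → ℝ) (x : Fin n × Fin m → ℝ) (p : Fin n × Fin m) :
    Prop :=
  1 ≤ ∑ j, x (p.1, j) ∨ c p.2 ≤ ∑ i, s i * x (i, p.2)

/-- The part of the assignment `x` on the edges at least as dense as `p`, extended by zero. -/
noncomputable def denserPart (v : Fin n × Fin m → ℝ) (s : Fin n → ℝ) (x : Fin n × Fin m → ℝ)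
    (p : Fin n × Fin m) : Fin n × Fin m → ℝ :=
  {q | v p / s p.1 ≤ v q / s q.1}.indicator x

/-- Greediness of `x` with respect to density: every edge of `E` is saturated by edges at least as
dense. No order of processing is fixed, so edges of equal density may share a job or a machine in
any proportion. -/
def IsDensityGreedy (v : Fin n × Fin m → ℝ) (s : Fin n → ℝ) (c : Fin m → ℝ)
    (E : Finset (Fin n × Fin m)) (x : Fin n × Fin m → ℝ) : Prop :=
  ∀ p ∈ E, Saturates s c (denserPart v s x p) p

theorem Saturates.mono (hs : ∀ i, 0 < s i) (hxy : x ≤ y) (hx : Saturates s c x p) :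
    Saturates s c y p :=
  hx.imp (fun h ↦ h.trans (Finset.sum_le_sum fun j _ ↦ hxy (p.1, j)))
    fun h ↦ h.trans
      (Finset.sum_le_sum fun i _ ↦ mul_le_mul_of_nonneg_left (hxy (i, p.2)) (hs i).le)

namespace SIGAPLPFeasible

theorem of_nonneg (hx0 : 0 ≤ x) (hxE : ∀ p, p ∉ E → x p = 0) (hjob : ∀ i, ∑ j, x (i, j) ≤ 1)
    (hmachine : ∀ j, ∑ i, s i * x (i, j) ≤ c j) : SIGAPLPFeasible s c E x := by
  refine ⟨fun p ↦ ⟨hx0 p, ?_⟩, hxE, hjob, hmachine⟩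
  calc x p ≤ ∑ j, x (p.1, j) :=
        Finset.single_le_sum (f := fun j ↦ x (p.1, j)) (fun j _ ↦ hx0 (p.1, j))
          (Finset.mem_univ p.2)
    _ ≤ 1 := hjob p.1

theorem nonneg (hx : SIGAPLPFeasible s c E x) : 0 ≤ x := fun p ↦ (hx.1 p).1

theorem mem_of_pos (hx : SIGAPLPFeasible s c E x) (hp : 0 < x p) : p ∈ E :=
  not_imp_comm.mp (hx.2.1 p) hp.ne'

theorem size_mul_le_capacity (hs : ∀ i, 0 < s i) (hx : SIGAPLPFeasible s c E x)
    (p : Fin n × Fin m) : s p.1 * x p ≤ c p.2 :=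
  (Finset.single_le_sum (f := fun i ↦ s i * x (i, p.2))
    (fun i _ ↦ mul_nonneg (hs i).le (hx.nonneg (i, p.2))) (Finset.mem_univ p.1)).trans
    (hx.2.2.2 p.2)

theorem capacity_nonneg (hs : ∀ i, 0 < s i) (hx : SIGAPLPFeasible s c E x) (j : Fin m) :
    0 ≤ c j :=
  (Finset.sum_nonneg fun i _ ↦ mul_nonneg (hs i).le (hx.nonneg (i, j))).trans (hx.2.2.2 j)

theorem capacity_pos_of_pos (hs : ∀ i, 0 < s i) (hx : SIGAPLPFeasible s c E x) (hp : 0 < x p) :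
    0 < c p.2 :=
  (mul_pos (hs p.1) hp).trans_le (hx.size_mul_le_capacity hs p)

theorem of_le (hs : ∀ i, 0 < s i) (hx : SIGAPLPFeasible s c E x) (hy0 : 0 ≤ y) (hyx : y ≤ x) :
    SIGAPLPFeasible s c E y :=
  of_nonneg hy0 (fun p hp ↦ le_antisymm ((hyx p).trans_eq (hx.2.1 p hp)) (hy0 p))
    (fun i ↦ (Finset.sum_le_sum fun j _ ↦ hyx (i, j)).trans (hx.2.2.1 i))
    fun j ↦ (Finset.sum_le_sum fun i _ ↦
      mul_le_mul_of_nonneg_left (hyx (i, j)) (hs i).le).trans (hx.2.2.2 j)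

theorem add_single (hx : SIGAPLPFeasible s c E x) (hp : p ∈ E) {δ : ℝ} (hδ : 0 ≤ δ)
    (hjob : ∑ j, x (p.1, j) + δ ≤ 1) (hmachine : ∑ i, s i * x (i, p.2) + s p.1 * δ ≤ c p.2) :
    SIGAPLPFeasible s c E (x + Pi.single p δ) := by
  obtain ⟨a, b⟩ := p
  refine of_nonneg (add_nonneg hx.nonneg (Pi.single_nonneg.mpr hδ)) (fun q hq ↦ ?_)
    (fun i ↦ ?_) fun j ↦ ?_
  · have hqp : q ≠ (a, b) := fun h ↦ hq (h ▸ hp)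
    simp [hx.2.1 q hq, hqp]
  · rcases eq_or_ne i a with rfl | hi
    · simpa [Pi.single_apply, Finset.sum_add_distrib] using hjob
    · simpa [Pi.single_apply, hi] using hx.2.2.1 i
  · rcases eq_or_ne j b with rfl | hj
    · simpa [Pi.single_apply, mul_add, Finset.sum_add_distrib] using hmachine
    · simpa [Pi.single_apply, hj] using hx.2.2.2 j

theorem exists_add_single_of_not_saturates (hs : ∀ i, 0 < s i) (hx : SIGAPLPFeasible s c E x)
    (hp : p ∈ E) (hsat : ¬ Saturates s c x p) :
    ∃ δ > 0, SIGAPLPFeasible s c E (x + Pi.single p δ) := by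
  obtain ⟨hjob, hmachine⟩ := not_or.mp hsat
  obtain ⟨δ, hδ0, hδ⟩ := exists_between
    (lt_min (sub_pos.mpr (not_le.mp hjob)) (div_pos (sub_pos.mpr (not_le.mp hmachine)) (hs p.1)))
  obtain ⟨hδjob, hδmachine⟩ := lt_min_iff.mp hδ
  rw [lt_div_iff₀' (hs p.1)] at hδmachine
  exact ⟨δ, hδ0, hx.add_single hp hδ0.le (by linarith) (by linarith)⟩

-- A machine of capacity zero imposes no dual constraint: its edges are forced to zero.
theorem sum_mul_le_dual (hs : ∀ i, 0 < s i) (hy : SIGAPLPFeasible s c E y) {u : Fin n → ℝ}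
    {w : Fin m → ℝ} (hu : 0 ≤ u) (hw : 0 ≤ w)
    (hdual : ∀ p ∈ E, 0 < c p.2 → v p ≤ u p.1 + s p.1 * w p.2) :
    ∑ p, v p * y p ≤ ∑ i, u i + ∑ j, c j * w j := by
  have hedge (p) : v p * y p ≤ u p.1 * y p + s p.1 * y p * w p.2 := by
    rcases (hy.nonneg p).eq_or_lt with hp | hp
    · simp [← hp]
    · have := mul_le_mul_of_nonneg_right
        (hdual p (hy.mem_of_pos hp) (hy.capacity_pos_of_pos hs hp)) hp.le
      linarith
  calc ∑ p, v p * y p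
      ≤ ∑ p, (u p.1 * y p + s p.1 * y p * w p.2) := Finset.sum_le_sum fun p _ ↦ hedge p
    _ = ∑ i, u i * ∑ j, y (i, j) + ∑ j, (∑ i, s i * y (i, j)) * w j := by
        simp only [Finset.sum_add_distrib, Finset.mul_sum, Finset.sum_mul]
        rw [Fintype.sum_prod_type, Fintype.sum_prod_type_right]
    _ ≤ ∑ i, u i + ∑ j, c j * w j := by
        gcongr with i _ j _
        · exact mul_le_of_le_one_right (hu i) (hy.2.2.1 i)
        · exact hw j
        · exact hy.2.2.2 j

end SIGAPLPFeasible

theorem isDensityGreedy_of_lexMax {α : Type*} [Preorder α] (hs : ∀ i, 0 < s i)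
    (e : α ≃ Fin n × Fin m) (hdens : Antitone fun k ↦ v (e k) / s (e k).1)
    (hx : SIGAPLPFeasible s c E x)
    (hlexmax : ∀ y, SIGAPLPFeasible s c E y → y ≠ x →
      ∀ k, (∀ l, l < k → x (e l) = y (e l)) → x (e k) ≠ y (e k) → y (e k) < x (e k)) :
    IsDensityGreedy v s c E x := by
  refine e.forall_congr_right.mp fun k hk ↦ ?_
  set g := (e '' Set.Iic k).indicator x with hg
  have hgfeas : SIGAPLPFeasible s c E g :=
    hx.of_le hs (Set.indicator_nonneg fun q _ ↦ hx.nonneg q)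
      (Set.indicator_le_self' fun q _ ↦ hx.nonneg q)
  have hgsat : Saturates s c g (e k) := by
    by_contra hsat
    obtain ⟨δ, hδ, hfeas⟩ := hgfeas.exists_add_single_of_not_saturates hs hk hsat
    have hraise : x (e k) < (g + Pi.single (e k) δ : Fin n × Fin m → ℝ) (e k) := by
      simpa [hg] using hδ
    have hagree (l) (hl : l < k) :
        x (e l) = (g + Pi.single (e k) δ : Fin n × Fin m → ℝ) (e l) := by
      simp [hg, hl.le, hl.ne]
    have hne : g + Pi.single (e k) δ ≠ x := fun h ↦ hraise.ne' (congrFun h (e k))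
    exact hraise.not_gt (hlexmax _ hfeas hne k hagree hraise.ne)
  refine hgsat.mono hs (Set.indicator_le_indicator_of_subset ?_ hx.nonneg)
  rintro _ ⟨l, hl, rfl⟩
  exact hdens hl

theorem density_mul_size_mul_denserPart_le (hv : 0 ≤ v) (hs : ∀ i, 0 < s i) (hx : 0 ≤ x)
    (p q : Fin n × Fin m) : v p / s p.1 * (s q.1 * denserPart v s x p q) ≤ v q * x q := by
  rw [denserPart, Set.indicator_apply]
  split_ifs with hdenser
  · rw [← mul_assoc]
    exact mul_le_mul_of_nonneg_right ((le_div_iff₀ (hs q.1)).mp hdenser) (hx q)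
  · simpa using mul_nonneg (hv q) (hx q)

theorem value_le_job_welfare (hv : 0 ≤ v) (hs : ∀ i, 0 < s i) (hx : 0 ≤ x)
    (hp : 1 ≤ ∑ j, denserPart v s x p (p.1, j)) : v p ≤ ∑ j, v (p.1, j) * x (p.1, j) :=
  calc v p ≤ v p * ∑ j, denserPart v s x p (p.1, j) := le_mul_of_one_le_right (hv p) hp
    _ = ∑ j, v p / s p.1 * (s p.1 * denserPart v s x p (p.1, j)) := by
        simp only [← mul_assoc, div_mul_cancel₀ _ (hs p.1).ne', Finset.mul_sum]
    _ ≤ ∑ j, v (p.1, j) * x (p.1, j) :=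
        Finset.sum_le_sum fun j _ ↦ density_mul_size_mul_denserPart_le hv hs hx p (p.1, j)

theorem density_mul_capacity_le_machine_welfare (hv : 0 ≤ v) (hs : ∀ i, 0 < s i) (hx : 0 ≤ x)
    (hp : c p.2 ≤ ∑ i, s i * denserPart v s x p (i, p.2)) :
    v p / s p.1 * c p.2 ≤ ∑ i, v (i, p.2) * x (i, p.2) :=
  calc v p / s p.1 * c p.2
      ≤ v p / s p.1 * ∑ i, s i * denserPart v s x p (i, p.2) :=
        mul_le_mul_of_nonneg_left hp (div_nonneg (hv p) (hs p.1).le)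
    _ ≤ ∑ i, v (i, p.2) * x (i, p.2) := by
        rw [Finset.mul_sum]
        exact Finset.sum_le_sum fun i _ ↦
          density_mul_size_mul_denserPart_le hv hs hx p (i, p.2)

theorem value_le_price_of_saturates (hv : 0 ≤ v) (hs : ∀ i, 0 < s i) (hx : 0 ≤ x)
    (hc : 0 < c p.2) (hp : Saturates s c (denserPart v s x p) p) :
    v p ≤ ∑ j, v (p.1, j) * x (p.1, j) +
      s p.1 * ((∑ i, v (i, p.2) * x (i, p.2)) / c p.2) := by
  have hwelfare (q) : 0 ≤ v q * x q := mul_nonneg (hv q) (hx q)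
  rcases hp with hjob | hmachine
  · refine le_add_of_le_of_nonneg (value_le_job_welfare hv hs hx hjob) (mul_nonneg (hs p.1).le ?_)
    exact div_nonneg (Finset.sum_nonneg fun i _ ↦ hwelfare _) hc.le
  · refine le_add_of_nonneg_of_le (Finset.sum_nonneg fun j _ ↦ hwelfare _) ?_
    rw [← div_le_iff₀' (hs p.1), le_div_iff₀ hc]
    exact density_mul_capacity_le_machine_welfare hv hs hx hmachine

theorem stmt7_general (hv : 0 ≤ v) (hs : ∀ i, 0 < s i) (hx : SIGAPLPFeasible s c E x)
    (hgreedy : IsDensityGreedy v s c E x) (hy : SIGAPLPFeasible s c E y) :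
    ∑ p, v p * y p ≤ 2 * ∑ p, v p * x p := by
  have hwelfare (q) : 0 ≤ v q * x q := mul_nonneg (hv q) (hx.nonneg q)
  have hmachine (j) : 0 ≤ ∑ i, v (i, j) * x (i, j) := Finset.sum_nonneg fun i _ ↦ hwelfare (i, j)
  calc ∑ p, v p * y p
      ≤ ∑ i, ∑ j, v (i, j) * x (i, j) + ∑ j, c j * ((∑ i, v (i, j) * x (i, j)) / c j) :=
        hy.sum_mul_le_dual hs (fun i ↦ Finset.sum_nonneg fun j _ ↦ hwelfare (i, j))
          (fun j ↦ div_nonneg (hmachine j) (hx.capacity_nonneg hs j))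
          fun p hp hc ↦ value_le_price_of_saturates hv hs hx.nonneg hc (hgreedy p hp)
    _ ≤ ∑ i, ∑ j, v (i, j) * x (i, j) + ∑ j, ∑ i, v (i, j) * x (i, j) := by
        gcongr with j
        rw [mul_div_left_comm]
        exact mul_le_of_le_one_right (hmachine j) (div_self_le_one (c j))
    _ = 2 * ∑ p, v p * x p := by
        rw [two_mul]
        nth_rw 1 [Fintype.sum_prod_type]
        rw [Fintype.sum_prod_type_right]

end

/-- The greedy (lexicographically maximal in decreasing density order) fractional
solution is a 2-approximation to the SIGAP[E] LP. -/
theorem stmt7 (n m : ℕ) (v : Fin n × Fin m → ℝ) (s : Fin n → ℝ) (c : Fin m → ℝ)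
    (hv : ∀ p, 0 ≤ v p) (hs : ∀ i, 0 < s i) (hc : ∀ j, 0 ≤ c j)
    (e : Fin (n * m) ≃ (Fin n × Fin m))
    (hdens : ∀ k l : Fin (n * m), k ≤ l → v (e l) / s (e l).1 ≤ v (e k) / s (e k).1)
    (E : Finset (Fin n × Fin m))
    (x : Fin n × Fin m → ℝ)
    (hx : SIGAPLPFeasible s c E x)
    (hlexmax : ∀ y, SIGAPLPFeasible s c E y → y ≠ x →
      ∀ k : Fin (n * m), (∀ l, l < k → x (e l) = y (e l)) → x (e k) ≠ y (e k) →
        y (e k) < x (e k)) :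
    ∀ y, SIGAPLPFeasible s c E y →
      ∑ p : Fin n × Fin m, v p * y p ≤ 2 * ∑ p : Fin n × Fin m, v p * x p :=
  fun _ hy ↦ stmt7_general hv hs hx
    (isDensityGreedy_of_lexMax hs e (fun k l ↦ hdens k l) hx hlexmax) hy
end

section
/- Fix numbers of jobs n and machines m, values v : Fin n × Fin m → ℝ with v ≥ 0, sizes s : Fin n → ℝ with s > 0, capacities c : Fin m → ℝ with c ≥ 0, and an enumeration e : Fin (n·m) ≃ (Fin n × Fin m) such that the densities v(e(k))/s((e(k)).1) are non-increasing in k. Let E be an edge set, i a job, E'_i a set of pairs with first coordinate i, and E' = (E \ E_i) ∪ E'_i. Let x be the lexicographically maximal feasible solution of the SIGAP[E] LP and x' the lexicographically maximal feasible solution of the SIGAP[E'] LP (lexicographically maximal means: for every other feasible solution y ≠ x, at the least index k with x(e(k)) ≠ y(e(k)) one has x(e(k)) > y(e(k))). Then ∑_{(i,j) ∈ E_i} v(i,j)·x(i,j) ≥ ∑_{(i,j) ∈ E_i} v(i,j)·x'(i,j). That is, the greedy density-ordered algorithm is a truthful fractional mechanism for SIGAP in the private graph model. -/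
/-!
Scaling by sizes turns the LP into fractional allocation on a bipartite graph whose edges are
processed in the order `e`: a lexicographically maximal solution blocks every edge `k`, meaning that
the edges up to `k` already exhaust its job or its machine. Compare the truthful run `q` with the
run `q'` in which job `i` misreports, on a prefix of the order. As long as `q` does not exhaust
job `i`, the total excess of `q'` over `q` on machines plus that of `q` over `q'` on the other jobs
grows only when `q'` uses a false edge of `i`, and by no more than the amount placed there, because
after an edge blocked in both runs the excesses at its two ends have the same sign. Summing the
excesses shows that on every prefix `q` places at least as much of job `i` on its true edges as `q'`
does, and Abel summation against the densities converts this into the inequality of values.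
-/

open Finset

variable {α β ι κ M R : Type*}

section Load

variable [DecidableEq β] [AddCommMonoid M]

/-- The load on the vertex `b` from the edges in `S`, where `f k` is the endpoint (the job or the
machine) of the edge `k` and `q k` the amount placed on it. -/
def load (f : α → β) (q : α → M) (S : Finset α) (b : β) : M :=
  ∑ k ∈ S with f k = b, q k

theorem sum_load [Fintype β] (f : α → β) (q : α → M) (S : Finset α) :
    ∑ b, load f q S b = ∑ k ∈ S, q k :=
  sum_fiberwise S f q

theorem load_insert_self [DecidableEq α] (f : α → β) (q : α → M) {S : Finset α} {k : α}
    (hk : k ∉ S) : load f q (insert k S) (f k) = load f q S (f k) + q k := by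
  simp only [load, filter_insert, if_true]
  rw [sum_insert (by simp [hk]), add_comm]

theorem load_insert_of_ne [DecidableEq α] (f : α → β) (q : α → M) (S : Finset α) {k : α} {b : β}
    (hb : f k ≠ b) : load f q (insert k S) b = load f q S b := by
  simp only [load, filter_insert, if_neg hb]

theorem load_inter_add_load_sdiff [DecidableEq α] (f : α → β) (q : α → M) (S E : Finset α)
    (b : β) : load f q (S ∩ E) b + load f q (S \ E) b = load f q S b := by
  simp only [load, sum_filter]
  exact sum_inter_add_sum_sdiff S E _

theorem load_sub {G : Type*} [AddCommGroup G] (f : α → β) (q r : α → G) (S : Finset α) (b : β) :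
    load f (q - r) S b = load f q S b - load f r S b :=
  sum_sub_distrib _ _

theorem load_nonneg [PartialOrder M] [IsOrderedAddMonoid M] (f : α → β) {q : α → M}
    (hq : ∀ k, 0 ≤ q k) (S : Finset α) (b : β) : 0 ≤ load f q S b :=
  sum_nonneg fun k _ => hq k

theorem load_mono [PartialOrder M] [IsOrderedAddMonoid M] (f : α → β) {q : α → M}
    (hq : ∀ k, 0 ≤ q k) {S T : Finset α} (hST : S ⊆ T) (b : β) : load f q S b ≤ load f q T b :=
  sum_le_sum_of_subset_of_nonneg (filter_subset_filter _ hST) fun k _ _ => hq k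

/-- The allocation that follows `q` up to the edge `k`, adds `ε` on `k` and leaves the later edges
empty; the competitor against which lexicographic maximality of `q` is tested. -/
def raiseAt [LinearOrder α] (q : α → M) (k : α) (ε : M) (l : α) : M :=
  (if l ≤ k then q l else 0) + if l = k then ε else 0

theorem load_raiseAt [Fintype α] [LinearOrder α] [LocallyFiniteOrderBot α] (f : α → β) (q : α → M)
    (k : α) (ε : M) (b : β) :
    load f (raiseAt q k ε) univ b = load f q (Iic k) b + if f k = b then ε else 0 := by
  simp only [load, raiseAt, sum_add_distrib]
  congr 1
  · rw [← sum_filter]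
    exact sum_congr (by grind) fun _ _ => rfl
  · simp [sum_ite_eq']

end Load

section Surplus

variable [DecidableEq β] [AddCommGroup M] [LinearOrder M]

/-- The total of the positive parts of the loads of `d` on the vertices in `T`. For a difference
`d` of two allocations it measures how much one overloads the vertices relative to the other. -/
def surplus (f : α → β) (d : α → M) (T : Finset β) (S : Finset α) : M :=
  ∑ b ∈ T, (load f d S b)⁺

theorem surplus_insert_of_notMem [DecidableEq α] (f : α → β) (d : α → M) {T : Finset β}
    (S : Finset α) {k : α} (hk : f k ∉ T) : surplus f d T (insert k S) = surplus f d T S :=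
  sum_congr rfl fun b hb => by rw [load_insert_of_ne f d S (ne_of_mem_of_not_mem hb hk).symm]

theorem surplus_insert_add_of_mem [DecidableEq α] (f : α → β) (d : α → M) {T : Finset β}
    (S : Finset α) {k : α} (hk : f k ∈ T) :
    surplus f d T (insert k S) + (load f d S (f k))⁺ =
      surplus f d T S + (load f d (insert k S) (f k))⁺ := by
  have hrest : ∑ b ∈ T.erase (f k), (load f d (insert k S) b)⁺ =
      ∑ b ∈ T.erase (f k), (load f d S b)⁺ :=
    sum_congr rfl fun b hb => by rw [load_insert_of_ne f d S (ne_of_mem_erase hb).symm]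
  rw [surplus, surplus, ← add_sum_erase T _ hk, ← add_sum_erase T _ hk, hrest]
  abel

theorem sum_load_le_surplus [IsOrderedAddMonoid M] (f : α → β) (d : α → M) (T : Finset β)
    (S : Finset α) : ∑ b ∈ T, load f d S b ≤ surplus f d T S :=
  sum_le_sum fun _ _ => le_posPart _

variable [IsOrderedAddMonoid M]

theorem posPart_add_le_add_posPart (x y : M) : (x + y)⁺ ≤ x⁺ + y⁺ :=
  sup_le (add_le_add (le_posPart x) (le_posPart y))
    (add_nonneg (posPart_nonneg x) (posPart_nonneg y))

theorem posPart_add_posPart_of_same_sign {x y : M} (h : 0 ≤ x ∧ 0 ≤ y ∨ x ≤ 0 ∧ y ≤ 0) :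
    x⁺ + y⁺ = (x + y)⁺ := by
  rcases h with ⟨hx, hy⟩ | ⟨hx, hy⟩
  · rw [posPart_of_nonneg hx, posPart_of_nonneg hy, posPart_of_nonneg (add_nonneg hx hy)]
  · rw [posPart_of_nonpos hx, posPart_of_nonpos hy, posPart_of_nonpos (add_nonpos hx hy), add_zero]

end Surplus

section Imbalance

variable [Fintype ι] [DecidableEq ι] [Fintype κ] [DecidableEq κ] [AddCommGroup M] [LinearOrder M]
  (job : α → ι) (machine : α → κ) (i : ι) (q q' : α → M)

/-- The potential comparing two runs on the edges in `S`: the overload of machines in `q'` relative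
to `q` plus the overload of jobs other than `i` in `q` relative to `q'`. -/
def imbalance (S : Finset α) : M :=
  surplus machine (q' - q) univ S + surplus job (q - q') {i}ᶜ S

theorem imbalance_empty : imbalance job machine i q q' ∅ = 0 := by
  simp [imbalance, surplus, load]

variable [IsOrderedAddMonoid M]

theorem load_sub_le_imbalance (S : Finset α) :
    load job (q' - q) S i ≤ imbalance job machine i q q' S := by
  have hmachine := sum_load_le_surplus machine (q' - q) univ S
  have hjob := sum_load_le_surplus job (q - q') {i}ᶜ S
  have htotal : ∑ j, load machine (q' - q) S j =
      load job (q' - q) S i + ∑ h ∈ {i}ᶜ, load job (q' - q) S h := by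
    rw [sum_load, ← sum_load job, Fintype.sum_eq_add_sum_compl i]
  have hneg : ∑ h ∈ {i}ᶜ, load job (q - q') S h = -∑ h ∈ {i}ᶜ, load job (q' - q) S h := by
    simp only [load_sub, ← sum_neg_distrib, neg_sub]
  grind [imbalance]

variable {job machine i q q'} [DecidableEq α] {S : Finset α} {k : α}

theorem imbalance_insert_le_add (hk : k ∉ S) (hi : job k = i) (hqk : q k = 0) (hq'k : 0 ≤ q' k) :
    imbalance job machine i q q' (insert k S) ≤ imbalance job machine i q q' S + q' k := by
  have hmachine := surplus_insert_add_of_mem machine (q' - q) S (mem_univ (machine k))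
  have hjob := surplus_insert_of_notMem job (q - q') (T := {i}ᶜ) S (k := k) (by simp [hi])
  have hstep := posPart_add_le_add_posPart (load machine (q' - q) S (machine k)) (q' k)
  rw [posPart_of_nonneg hq'k] at hstep
  rw [load_insert_self machine _ hk, Pi.sub_apply, hqk, sub_zero] at hmachine
  grind [imbalance]

theorem imbalance_insert_le_of_load_machine_le (hi : job k = i)
    (hle : load machine q' (insert k S) (machine k) ≤ load machine q (insert k S) (machine k)) :
    imbalance job machine i q q' (insert k S) ≤ imbalance job machine i q q' S := by
  have hmachine := surplus_insert_add_of_mem machine (q' - q) S (mem_univ (machine k))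
  have hjob := surplus_insert_of_notMem job (q - q') (T := {i}ᶜ) S (k := k) (by simp [hi])
  rw [load_sub _ _ _ (insert k S), posPart_of_nonpos (sub_nonpos.2 hle)] at hmachine
  have hpos := posPart_nonneg (load machine (q' - q) S (machine k))
  grind [imbalance]

theorem imbalance_insert_eq (hk : k ∉ S) (hi : job k ≠ i) (heq : q k = q' k) :
    imbalance job machine i q q' (insert k S) = imbalance job machine i q q' S := by
  have hmachine := surplus_insert_add_of_mem machine (q' - q) S (mem_univ (machine k))
  have hjob := surplus_insert_add_of_mem job (q - q') (T := {i}ᶜ) S (k := k) (by simp [hi])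
  rw [load_insert_self _ _ hk, Pi.sub_apply, heq, sub_self, add_zero] at hmachine hjob
  rw [imbalance, imbalance, add_right_cancel hmachine, add_right_cancel hjob]

theorem imbalance_insert_le_of_same_sign (hk : k ∉ S) (hi : job k ≠ i)
    (hsign : 0 ≤ load machine (q' - q) (insert k S) (machine k) ∧
        0 ≤ load job (q - q') (insert k S) (job k) ∨
      load machine (q' - q) (insert k S) (machine k) ≤ 0 ∧
        load job (q - q') (insert k S) (job k) ≤ 0) :
    imbalance job machine i q q' (insert k S) ≤ imbalance job machine i q q' S := by
  have hmachine := surplus_insert_add_of_mem machine (q' - q) S (mem_univ (machine k))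
  have hjob := surplus_insert_add_of_mem job (q - q') (T := {i}ᶜ) S (k := k) (by simp [hi])
  have hconserved : load machine (q' - q) (insert k S) (machine k) +
      load job (q - q') (insert k S) (job k) =
        load machine (q' - q) S (machine k) + load job (q - q') S (job k) := by
    rw [load_insert_self _ _ hk, load_insert_self _ _ hk, Pi.sub_apply, Pi.sub_apply]
    abel
  have hstep : (load machine (q' - q) (insert k S) (machine k))⁺ +
      (load job (q - q') (insert k S) (job k))⁺ ≤
        (load machine (q' - q) S (machine k))⁺ + (load job (q - q') S (job k))⁺ := by
    rw [posPart_add_posPart_of_same_sign hsign, hconserved]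
    exact posPart_add_le_add_posPart _ _
  grind [imbalance]

end Imbalance

section Allocation

variable [DecidableEq ι] [DecidableEq κ] [AddCommGroup M] [LinearOrder M] [Fintype α]
  (job : α → ι) (machine : α → κ) (a : ι → M) (b : κ → M)

/-- A fractional allocation on the bipartite graph with edge set `E`, in which the edge `k` joins
`job k` to `machine k`. The capacity `a h` of a job is its size, and `q k` is the amount of size
placed along `k`. -/
structure IsAllocation (E : Finset α) (q : α → M) : Prop where
  nonneg : ∀ k, 0 ≤ q k
  eq_zero : ∀ k ∉ E, q k = 0
  load_job_le : ∀ h, load job q univ h ≤ a h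
  load_machine_le : ∀ j, load machine q univ j ≤ b j

variable {job machine a b} {E E' : Finset α} {q q' : α → M}

theorem IsAllocation.load_job_le_of_subset [IsOrderedAddMonoid M]
    (hq : IsAllocation job machine a b E q) (S : Finset α) (h : ι) : load job q S h ≤ a h :=
  (load_mono job hq.nonneg (subset_univ S) h).trans (hq.load_job_le h)

theorem IsAllocation.load_machine_le_of_subset [IsOrderedAddMonoid M]
    (hq : IsAllocation job machine a b E q) (S : Finset α) (j : κ) : load machine q S j ≤ b j :=
  (load_mono machine hq.nonneg (subset_univ S) j).trans (hq.load_machine_le j)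

variable [LinearOrder α]

variable (job machine a b) in
/-- An allocation that is lexicographically maximal, earlier edges having priority. -/
structure IsLexMaxAllocation (E : Finset α) (q : α → M) : Prop
    extends IsAllocation job machine a b E q where
  toLex_le : ∀ y, IsAllocation job machine a b E y → toLex y ≤ toLex q

variable [LocallyFiniteOrderBot α]

variable (job machine a b) in
/-- The edge `k` is blocked when the edges up to and including `k` exhaust one of its endpoints. -/
def IsBlocked (q : α → M) (k : α) : Prop :=
  load job q (Iic k) (job k) = a (job k) ∨ load machine q (Iic k) (machine k) = b (machine k)

variable [IsOrderedAddMonoid M]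

theorem isAllocation_raiseAt (hq : IsAllocation job machine a b E q) {k : α} (hk : k ∈ E) {ε : M}
    (hε : 0 ≤ ε) (hjob : load job q (Iic k) (job k) + ε ≤ a (job k))
    (hmachine : load machine q (Iic k) (machine k) + ε ≤ b (machine k)) :
    IsAllocation job machine a b E (raiseAt q k ε) where
  nonneg l := add_nonneg (by split_ifs <;> simp [hq.nonneg l]) (by split_ifs <;> simp [hε])
  eq_zero l hl := by
    have hlk : l ≠ k := (ne_of_mem_of_not_mem hk hl).symm
    simp [raiseAt, hlk, hq.eq_zero l hl]
  load_job_le h := by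
    rw [load_raiseAt]
    split_ifs with hh
    · exact hh ▸ hjob
    · simpa using hq.load_job_le_of_subset (Iic k) h
  load_machine_le j := by
    rw [load_raiseAt]
    split_ifs with hj
    · exact hj ▸ hmachine
    · simpa using hq.load_machine_le_of_subset (Iic k) j

theorem IsLexMaxAllocation.isBlocked (hq : IsLexMaxAllocation job machine a b E q) {k : α}
    (hk : k ∈ E) : IsBlocked job machine a b q k := by
  by_contra hfree
  obtain ⟨hjob, hmachine⟩ := not_or.1 hfree
  replace hjob := (hq.load_job_le_of_subset (Iic k) (job k)).lt_of_ne hjob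
  replace hmachine := (hq.load_machine_le_of_subset (Iic k) (machine k)).lt_of_ne hmachine
  obtain ⟨ε, hε, hεjob, hεmachine⟩ : ∃ ε : M, 0 < ε ∧
      load job q (Iic k) (job k) + ε ≤ a (job k) ∧
      load machine q (Iic k) (machine k) + ε ≤ b (machine k) :=
    ⟨min (a (job k) - load job q (Iic k) (job k))
        (b (machine k) - load machine q (Iic k) (machine k)),
      lt_min (sub_pos.2 hjob) (sub_pos.2 hmachine),
      le_sub_iff_add_le'.1 (min_le_left _ _), le_sub_iff_add_le'.1 (min_le_right _ _)⟩
  have hraise := isAllocation_raiseAt hq.toIsAllocation hk hε.le hεjob hεmachine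
  have hle : raiseAt q k ε k ≤ q k :=
    Pi.apply_le_of_toLex (hq.toLex_le _ hraise) fun l hl => by simp [raiseAt, hl.le, hl.ne]
  simp only [raiseAt, le_refl, if_true] at hle
  exact hε.not_ge (nonpos_of_add_le_right hle)

theorem IsBlocked.same_sign (hq : IsAllocation job machine a b E q)
    (hq' : IsAllocation job machine a b E' q') {k : α} (hblocked : IsBlocked job machine a b q k)
    (hblocked' : IsBlocked job machine a b q' k) :
    0 ≤ load machine (q' - q) (Iic k) (machine k) ∧ 0 ≤ load job (q - q') (Iic k) (job k) ∨
      load machine (q' - q) (Iic k) (machine k) ≤ 0 ∧ load job (q - q') (Iic k) (job k) ≤ 0 := by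
  have hjob := hq.load_job_le_of_subset (Iic k) (job k)
  have hjob' := hq'.load_job_le_of_subset (Iic k) (job k)
  have hmachine := hq.load_machine_le_of_subset (Iic k) (machine k)
  have hmachine' := hq'.load_machine_le_of_subset (Iic k) (machine k)
  simp only [load_sub, sub_nonneg, sub_nonpos]
  grind [IsBlocked]

end Allocation

theorem lowerSet_induction [LinearOrder α] [LocallyFiniteOrderBot α] {P : Finset α → Prop}
    (empty : P ∅) (step : ∀ k, P (Iio k) → P (Iic k)) (S : Finset α)
    (hS : IsLowerSet (S : Set α)) : P S := by
  induction S using Finset.induction_on_max with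
  | empty => exact empty
  | insert k S hlt ih =>
    have hIio : S = Iio k := by
      ext l
      refine ⟨fun hl => mem_Iio.2 (hlt l hl), fun hl => ?_⟩
      have hmem : l ∈ insert k S := hS (mem_Iio.1 hl).le (mem_insert_self k S)
      exact mem_of_mem_insert_of_ne hmem (mem_Iio.1 hl).ne
    subst hIio
    rw [Iio_insert]
    exact step k (ih (by simpa using isLowerSet_Iio k))

section Truthfulness

variable [Fintype α] [LinearOrder α] [LocallyFiniteOrderBot α]
  [DecidableEq ι] [DecidableEq κ] [AddCommGroup M] [LinearOrder M] [IsOrderedAddMonoid M]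
  {job : α → ι} {machine : α → κ} {a : ι → M} {b : κ → M} {E E' : Finset α} {i : ι} {q q' : α → M}

theorem imbalance_le_load_sdiff [Fintype ι] [Fintype κ]
    (hE : ∀ k, job k ≠ i → (k ∈ E' ↔ k ∈ E))
    (hq : IsLexMaxAllocation job machine a b E q)
    (hq' : IsLexMaxAllocation job machine a b E' q') {S : Finset α}
    (hS : IsLowerSet (S : Set α)) (hfree : load job q S i < a i) :
    imbalance job machine i q q' S ≤ load job q' (S \ E) i := by
  refine lowerSet_induction (P := fun S => load job q S i < a i →
      imbalance job machine i q q' S ≤ load job q' (S \ E) i)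
    (by simp [imbalance_empty, load]) (fun k ih hfree => ?_) S hS hfree
  specialize ih ((load_mono job hq.nonneg Iio_subset_Iic_self i).trans_lt hfree)
  have hk : k ∉ Iio k := by simp
  have hmono : load job q' (Iio k \ E) i ≤ load job q' (Iic k \ E) i :=
    load_mono job hq'.nonneg (sdiff_subset_sdiff Iio_subset_Iic_self le_rfl) i
  by_cases hi : job k = i <;> by_cases hkE : k ∈ E
  · have hfull : load machine q (Iic k) (machine k) = b (machine k) :=
      (hq.isBlocked hkE).resolve_left (hi ▸ hfree.ne)
    have hle := hfull ▸ hq'.load_machine_le_of_subset (Iic k) (machine k)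
    rw [← Iio_insert] at hle hmono ⊢
    exact (imbalance_insert_le_of_load_machine_le hi hle).trans (ih.trans hmono)
  · have hgain : load job q' (Iic k \ E) i = load job q' (Iio k \ E) i + q' k := by
      rw [← Iio_insert, insert_sdiff_of_notMem _ hkE, ← hi, load_insert_self _ _ (by simp)]
    rw [hgain, ← Iio_insert]
    exact (imbalance_insert_le_add hk hi (hq.eq_zero k hkE) (hq'.nonneg k)).trans
      (add_le_add_left ih _)
  · have hsign := (hq.isBlocked hkE).same_sign hq.toIsAllocation hq'.toIsAllocation
      (hq'.isBlocked ((hE k hi).2 hkE))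
    rw [← Iio_insert] at hsign hmono ⊢
    exact (imbalance_insert_le_of_same_sign hk hi hsign).trans (ih.trans hmono)
  · have heq : q k = q' k := by
      rw [hq.eq_zero k hkE, hq'.eq_zero k (mt (hE k hi).1 hkE)]
    rw [← Iio_insert] at hmono ⊢
    exact (imbalance_insert_eq hk hi heq).trans_le (ih.trans hmono)

theorem load_job_inter_le_of_misreport [Finite ι] [Finite κ]
    (hE : ∀ k, job k ≠ i → (k ∈ E' ↔ k ∈ E))
    (hq : IsLexMaxAllocation job machine a b E q)
    (hq' : IsLexMaxAllocation job machine a b E' q') {S : Finset α}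
    (hS : IsLowerSet (S : Set α)) :
    load job q' (S ∩ E) i ≤ load job q (S ∩ E) i := by
  cases nonempty_fintype ι
  cases nonempty_fintype κ
  have hsplit := load_inter_add_load_sdiff job q S E i
  have hsplit' := load_inter_add_load_sdiff job q' S E i
  have hoff : load job q (S \ E) i = 0 :=
    sum_eq_zero fun k hk => hq.eq_zero k (mem_sdiff.1 (mem_of_mem_filter k hk)).2
  have hoff' := load_nonneg job hq'.nonneg (S \ E) i
  have hle' := hq'.load_job_le_of_subset S i
  rcases (hq.load_job_le_of_subset S i).eq_or_lt with hfull | hfree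
  · grind
  · have hupper := imbalance_le_load_sdiff hE hq hq' hS hfree
    have hlower := load_sub_le_imbalance job machine i q q' S
    rw [load_sub] at hlower
    grind

end Truthfulness

section Abel

variable [LinearOrder α] [Ring R] [PartialOrder R] [IsOrderedRing R] {w d : α → R}

theorem mul_sum_le_sum_mul_of_antitoneOn {T : Finset α} {t : R} (ht : ∀ k ∈ T, t ≤ w k)
    (hw : AntitoneOn w T) (hd : ∀ k ∈ T, 0 ≤ ∑ l ∈ T with l ≤ k, d l) :
    t * ∑ k ∈ T, d k ≤ ∑ k ∈ T, w k * d k := by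
  induction T using Finset.induction_on_max generalizing t with
  | empty => simp
  | insert k T hlt ih =>
    have hkT : k ∉ T := fun hk => (hlt k hk).false
    have htotal : 0 ≤ ∑ l ∈ insert k T, d l := by
      have hprefix : {l ∈ insert k T | l ≤ k} = insert k T :=
        filter_true_of_mem fun l hl => (mem_insert.1 hl).elim le_of_eq fun hl => (hlt l hl).le
      simpa only [hprefix] using hd k (mem_insert_self k T)
    have hT : w k * ∑ l ∈ T, d l ≤ ∑ l ∈ T, w l * d l := by
      refine ih (fun l hl => hw (by simp [hl]) (by simp) (hlt l hl).le) (hw.mono (by simp))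
        fun l hl => ?_
      have hprefix := hd l (mem_insert_of_mem hl)
      rwa [filter_insert, if_neg (hlt l hl).not_ge] at hprefix
    calc t * ∑ l ∈ insert k T, d l
        ≤ w k * ∑ l ∈ insert k T, d l :=
          mul_le_mul_of_nonneg_right (ht k (mem_insert_self k T)) htotal
      _ = w k * d k + w k * ∑ l ∈ T, d l := by rw [sum_insert hkT, mul_add]
      _ ≤ w k * d k + ∑ l ∈ T, w l * d l := by gcongr
      _ = ∑ l ∈ insert k T, w l * d l := by rw [sum_insert hkT]

end Abel

theorem stmt8_general [Fintype α] [LinearOrder α] [LocallyFiniteOrderBot α]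
    [Finite ι] [DecidableEq ι] [Finite κ] [DecidableEq κ]
    [Ring R] [LinearOrder R] [IsOrderedRing R]
    {job : α → ι} {machine : α → κ} {a : ι → R} {b : κ → R} {E E' : Finset α} {i : ι}
    {q q' w : α → R} (hE : ∀ k, job k ≠ i → (k ∈ E' ↔ k ∈ E))
    (hq : IsLexMaxAllocation job machine a b E q) (hq' : IsLexMaxAllocation job machine a b E' q')
    (hw : ∀ k ∈ E, job k = i → 0 ≤ w k) (hanti : AntitoneOn w {k | k ∈ E ∧ job k = i}) :
    ∑ k ∈ E with job k = i, w k * q' k ≤ ∑ k ∈ E with job k = i, w k * q k := by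
  have hprefix (k : α) : 0 ≤ ∑ l ∈ {l ∈ E | job l = i} with l ≤ k, (q l - q' l) := by
    have hedges : {l ∈ {l ∈ E | job l = i} | l ≤ k} = {l ∈ Iic k ∩ E | job l = i} := by grind
    rw [hedges, sum_sub_distrib, sub_nonneg]
    exact load_job_inter_le_of_misreport hE hq hq' (by simpa using isLowerSet_Iic k)
  have habel := mul_sum_le_sum_mul_of_antitoneOn (T := {k ∈ E | job k = i}) (t := 0) (w := w)
    (by simpa using hw) (by simpa using hanti) fun k _ => hprefix k
  rw [zero_mul] at habel
  simpa only [mul_sub, sum_sub_distrib, sub_nonneg] using habel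

section SIGAP

variable {n m : ℕ} {s : Fin n → ℝ} {c : Fin m → ℝ} {E : Finset (Fin n × Fin m)}
  {x : Fin n × Fin m → ℝ} (e : Fin (n * m) ≃ Fin n × Fin m)

/-- The allocation of an LP vector `x`, measured in size and indexed by position in the order. -/
def sizeAllocation (s : Fin n → ℝ) (x : Fin n × Fin m → ℝ) (k : Fin (n * m)) : ℝ :=
  s (e k).1 * x (e k)

theorem load_job_sizeAllocation (h : Fin n) :
    load (fun k => (e k).1) (sizeAllocation e s x) univ h = s h * ∑ j, x (h, j) := by
  simp only [load, sizeAllocation, sum_filter]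
  rw [e.sum_comp fun p => if p.1 = h then s p.1 * x p else 0, Fintype.sum_prod_type,
    sum_eq_single h (by simp +contextual) (by simp)]
  simp [mul_sum]

theorem load_machine_sizeAllocation (j : Fin m) :
    load (fun k => (e k).2) (sizeAllocation e s x) univ j = ∑ h, s h * x (h, j) := by
  simp only [load, sizeAllocation, sum_filter]
  rw [e.sum_comp fun p => if p.2 = j then s p.1 * x p else 0, Fintype.sum_prod_type]
  simp

theorem sigapLPFeasible_iff_isAllocation (hs : ∀ h, 0 < s h) :
    SIGAPLPFeasible s c E x ↔ IsAllocation (fun k => (e k).1) (fun k => (e k).2) s c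
      {k | e k ∈ E} (sizeAllocation e s x) := by
  have hrow (h : Fin n) : s h * ∑ j, x (h, j) ≤ s h ↔ ∑ j, x (h, j) ≤ 1 :=
    mul_le_iff_le_one_right (hs h)
  constructor
  · rintro ⟨hbounds, hsupp, hjob, hmachine⟩
    refine ⟨fun k => mul_nonneg (hs _).le (hbounds _).1, fun k hk => ?_, fun h => ?_, fun j => ?_⟩
    · rw [sizeAllocation, hsupp _ (by simpa using hk), mul_zero]
    · rw [load_job_sizeAllocation, hrow]
      exact hjob h
    · rw [load_machine_sizeAllocation]
      exact hmachine j
  · rintro ⟨hnonneg, hsupp, hjob, hmachine⟩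
    simp only [load_job_sizeAllocation, load_machine_sizeAllocation, hrow] at hjob hmachine
    have hx (p : Fin n × Fin m) : 0 ≤ x p := by
      simpa [sizeAllocation, hs] using hnonneg (e.symm p)
    refine ⟨fun p => ⟨hx p, ?_⟩, fun p hp => ?_, hjob, hmachine⟩
    · exact (single_le_sum (fun j _ => hx (p.1, j)) (mem_univ p.2)).trans (hjob p.1)
    · simpa [sizeAllocation, hp, (hs _).ne'] using hsupp (e.symm p)

theorem sizeAllocation_surjective (hs : ∀ h, 0 < s h) :
    Function.Surjective (sizeAllocation e s) := fun y =>
  ⟨fun p => y (e.symm p) / s p.1, funext fun k => by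
    simp [sizeAllocation, mul_div_cancel₀ _ (hs _).ne']⟩

variable {e}

theorem SIGAPLPFeasible.isLexMaxAllocation (hs : ∀ h, 0 < s h) (hx : SIGAPLPFeasible s c E x)
    (hlexmax : ∀ y, SIGAPLPFeasible s c E y → y ≠ x →
      ∀ k : Fin (n * m), (∀ l, l < k → x (e l) = y (e l)) → x (e k) ≠ y (e k) →
        y (e k) < x (e k)) :
    IsLexMaxAllocation (fun k => (e k).1) (fun k => (e k).2) s c {k | e k ∈ E}
      (sizeAllocation e s x) where
  toIsAllocation := (sigapLPFeasible_iff_isAllocation e hs).1 hx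
  toLex_le y hy := by
    obtain ⟨z, rfl⟩ := sizeAllocation_surjective e hs y
    rw [← sigapLPFeasible_iff_isAllocation e hs] at hy
    by_contra hlt
    obtain ⟨k, hbefore, hk⟩ := not_le.1 hlt
    replace hbefore (l) (hl : l < k) : x (e l) = z (e l) :=
      mul_left_cancel₀ (hs _).ne' (hbefore l hl)
    replace hk : x (e k) < z (e k) := lt_of_mul_lt_mul_left hk (hs _).le
    exact (hlexmax z hy (fun h => hk.ne' (congrFun h _)) k hbefore hk.ne).not_gt hk

variable (e)

theorem sum_value_eq_sum_density_mul (hs : ∀ h, 0 < s h) (v : Fin n × Fin m → ℝ)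
    (E : Finset (Fin n × Fin m)) (i : Fin n) (x : Fin n × Fin m → ℝ) :
    ∑ p ∈ E.filter (fun q => q.1 = i), v p * x p =
      ∑ k ∈ ({k | e k ∈ E} : Finset _) with (e k).1 = i,
        v (e k) / s (e k).1 * sizeAllocation e s x k := by
  refine (sum_equiv e (by simp) fun k _ => ?_).symm
  rw [sizeAllocation, ← mul_assoc, div_mul_cancel₀ _ (hs _).ne']

end SIGAP

/-- The greedy density-ordered (lexicographically maximal) algorithm is a
truthful fractional mechanism for SIGAP in the private graph model. -/
theorem stmt8 (n m : ℕ) (v : Fin n × Fin m → ℝ) (s : Fin n → ℝ) (c : Fin m → ℝ)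
    (hv : ∀ p, 0 ≤ v p) (hs : ∀ i, 0 < s i) (hc : ∀ j, 0 ≤ c j)
    (e : Fin (n * m) ≃ (Fin n × Fin m))
    (hdens : ∀ k l : Fin (n * m), k ≤ l → v (e l) / s (e l).1 ≤ v (e k) / s (e k).1)
    (E Ei' : Finset (Fin n × Fin m)) (i : Fin n)
    (hEi' : ∀ q ∈ Ei', q.1 = i)
    (E' : Finset (Fin n × Fin m))
    (hE' : E' = (E \ E.filter (fun q => q.1 = i)) ∪ Ei')
    (x x' : Fin n × Fin m → ℝ)
    (hx : SIGAPLPFeasible s c E x)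
    (hlexmax : ∀ y, SIGAPLPFeasible s c E y → y ≠ x →
      ∀ k : Fin (n * m), (∀ l, l < k → x (e l) = y (e l)) → x (e k) ≠ y (e k) →
        y (e k) < x (e k))
    (hx' : SIGAPLPFeasible s c E' x')
    (hlexmax' : ∀ y, SIGAPLPFeasible s c E' y → y ≠ x' →
      ∀ k : Fin (n * m), (∀ l, l < k → x' (e l) = y (e l)) → x' (e k) ≠ y (e k) →
        y (e k) < x' (e k)) :
    ∑ p ∈ E.filter (fun q => q.1 = i), v p * x' p
      ≤ ∑ p ∈ E.filter (fun q => q.1 = i), v p * x p := by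
  rw [sum_value_eq_sum_density_mul e hs, sum_value_eq_sum_density_mul e hs]
  exact stmt8_general (by grind) (hx.isLexMaxAllocation hs hlexmax)
    (hx'.isLexMaxAllocation hs hlexmax') (fun k _ _ => div_nonneg (hv _) (hs _).le)
    fun k _ l _ hkl => hdens k l hkl
end

section
/- Fix numbers of jobs n and machines m, values v : Fin n → ℝ with v ≥ 0, machine-dependent sizes s : Fin n × Fin m → ℝ with s > 0, capacities c : Fin m → ℝ with c ≥ 0, and an enumeration e : Fin (n·m) ≃ (Fin n × Fin m) such that the densities v((e(k)).1)/s(e(k)) are non-increasing in k. Let E be an edge set and let x be a feasible solution of the VIGAP[E] LP that is lexicographically maximal: for every feasible solution y ≠ x of the VIGAP[E] LP, at the least index k with x(e(k)) ≠ y(e(k)) one has x(e(k)) > y(e(k)). Then for every feasible solution y of the VIGAP[E] LP, ∑_{(i,j)} v(i)·y(i,j) ≤ 2 · ∑_{(i,j)} v(i)·x(i,j). That is, the greedy density-ordered algorithm adapted to the value-invariant GAP provides a 2-approximation to the VIGAP[E] LP. -/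
/-- Feasibility for the VIGAP[E] LP (machine-dependent sizes). -/
def VIGAPLPFeasible {n m : ℕ} (s : Fin n × Fin m → ℝ) (c : Fin m → ℝ)
    (E : Finset (Fin n × Fin m)) (x : Fin n × Fin m → ℝ) : Prop :=
  (∀ p, 0 ≤ x p ∧ x p ≤ 1) ∧ (∀ p, p ∉ E → x p = 0) ∧
    (∀ i, ∑ j, x (i, j) ≤ 1) ∧ (∀ j, ∑ i, s (i, j) * x (i, j) ≤ c j)

/-!
The proof is dual fitting. If the pairs up to `(i, j)` in `E` did not fill machine `j` and job `i`
were not fully assigned, one could raise `x (i, j)`, discarding later pairs, and obtain a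
lexicographically larger solution. So every pair of `E` is blocked by its job or by its machine.
Pricing a saturated job at its value, and machine `j` at the largest density among the pairs it
blocks, gives a feasible dual solution. The job prices cost at most the value of `x`, because
blocked jobs are fully assigned; so do the machine prices, because whatever fills machine `j` up to
a blocked pair is at least as dense as that pair. Weak duality then gives the factor `2`.
-/

section WeakDuality

variable {ι κ R : Type*} [Fintype ι] [Fintype κ] [CommSemiring R] [PartialOrder R]

/-- The feasible solutions of the VIGAP[E] LP, for arbitrary finite types of jobs `ι` and machines
`κ` and an ordered semiring of coefficients. The bound `x p ≤ 1` is left out: it follows from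
`nonneg` and `job_le`. -/
structure IsFractionalAssignment (s : ι × κ → R) (c : κ → R) (E : Set (ι × κ))
    (x : ι × κ → R) : Prop where
  nonneg : ∀ p, 0 ≤ x p
  eq_zero_of_notMem : ∀ p ∉ E, x p = 0
  job_le : ∀ i, ∑ j, x (i, j) ≤ 1
  machine_le : ∀ j, ∑ i, s (i, j) * x (i, j) ≤ c j

/-- Lexicographic maximality among the feasible solutions, where coordinates that come earlier for
`r` are compared first. For a strict linear order `r` it characterizes the output of the greedy
algorithm that processes pairs in that order. -/
structure IsLexMaximalAssignment (r : ι × κ → ι × κ → Prop) (s : ι × κ → R) (c : κ → R)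
    (E : Set (ι × κ)) (x : ι × κ → R) : Prop extends IsFractionalAssignment s c E x where
  not_lex : ∀ y, IsFractionalAssignment s c E y → ¬ Pi.Lex r (· < ·) x y

variable [IsOrderedRing R] {s w x : ι × κ → R} {a : ι → R} {b c : κ → R} {E : Set (ι × κ)}

theorem IsFractionalAssignment.sum_mul_le_of_dual_feasible (hx : IsFractionalAssignment s c E x)
    (ha : ∀ i, 0 ≤ a i) (hb : ∀ j, 0 ≤ b j) (hw : ∀ p ∈ E, w p ≤ a p.1 + b p.2 * s p) :
    ∑ p, w p * x p ≤ ∑ i, a i + ∑ j, b j * c j := by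
  have hterm (p : ι × κ) : w p * x p ≤ a p.1 * x p + b p.2 * (s p * x p) := by
    by_cases hp : p ∈ E
    · calc w p * x p ≤ (a p.1 + b p.2 * s p) * x p :=
            mul_le_mul_of_nonneg_right (hw p hp) (hx.nonneg p)
        _ = a p.1 * x p + b p.2 * (s p * x p) := by ring
    · simp [hx.eq_zero_of_notMem p hp]
  calc ∑ p, w p * x p
      ≤ ∑ p : ι × κ, (a p.1 * x p + b p.2 * (s p * x p)) := Finset.sum_le_sum fun p _ => hterm p
    _ = ∑ i, a i * ∑ j, x (i, j) + ∑ j, b j * ∑ i, s (i, j) * x (i, j) := by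
        rw [Finset.sum_add_distrib, Fintype.sum_prod_type, Fintype.sum_prod_type_right]
        simp only [Finset.mul_sum]
    _ ≤ ∑ i, a i + ∑ j, b j * c j :=
        add_le_add
          (Finset.sum_le_sum fun i _ => mul_le_of_le_one_right (ha i) (hx.job_le i))
          (Finset.sum_le_sum fun j _ => mul_le_mul_of_nonneg_left (hx.machine_le j) (hb j))

theorem IsFractionalAssignment.indicator (hs : ∀ p, 0 ≤ s p) (hx : IsFractionalAssignment s c E x)
    (A : Set (ι × κ)) : IsFractionalAssignment s c E (A.indicator x) where
  nonneg := Set.indicator_nonneg fun p _ => hx.nonneg p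
  eq_zero_of_notMem p hp := Set.indicator_apply_eq_zero.2 fun _ => hx.eq_zero_of_notMem p hp
  job_le i := (Finset.sum_le_sum fun j _ =>
    Set.indicator_le_self' (fun q _ => hx.nonneg q) (i, j)).trans (hx.job_le i)
  machine_le j := (Finset.sum_le_sum fun i _ => mul_le_mul_of_nonneg_left
    (Set.indicator_le_self' (fun q _ => hx.nonneg q) (i, j)) (hs (i, j))).trans (hx.machine_le j)

theorem IsFractionalAssignment.add_single [DecidableEq ι] [DecidableEq κ]
    (hx : IsFractionalAssignment s c E x) {p : ι × κ} (hp : p ∈ E) {δ : R} (hδ : 0 ≤ δ)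
    (hjob : ∑ j, x (p.1, j) + δ ≤ 1)
    (hmachine : ∑ i, s (i, p.2) * x (i, p.2) + s p * δ ≤ c p.2) :
    IsFractionalAssignment s c E (x + Pi.single p δ) where
  nonneg q := by
    have hsingle : 0 ≤ (Pi.single p δ : ι × κ → R) := Pi.single_nonneg.2 hδ
    exact add_nonneg (hx.nonneg q) (hsingle q)
  eq_zero_of_notMem q hq := by
    have hqp : q ≠ p := fun h => hq (h ▸ hp)
    simp [hx.eq_zero_of_notMem q hq, hqp]
  job_le i := by
    rcases eq_or_ne i p.1 with rfl | hi
    · simpa [Finset.sum_add_distrib, Pi.single_apply, Prod.ext_iff] using hjob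
    · simpa [Pi.single_apply, Prod.ext_iff, hi] using hx.job_le i
  machine_le j := by
    rcases eq_or_ne j p.2 with rfl | hj
    · simpa [mul_add, Finset.sum_add_distrib, Pi.single_apply, Prod.ext_iff] using hmachine
    · simpa [Pi.single_apply, Prod.ext_iff, hj] using hx.machine_le j

end WeakDuality

section Greedy

variable {ι κ 𝕜 : Type*} [Field 𝕜] [LinearOrder 𝕜] [IsStrictOrderedRing 𝕜]
  {r : ι × κ → ι × κ → Prop} {v : ι → 𝕜} {s x y : ι × κ → 𝕜} {c : κ → 𝕜} {E : Set (ι × κ)}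

theorem exists_job_price {R : Type*} [Fintype κ] [CommSemiring R] [PartialOrder R] [IsOrderedRing R]
    {v : ι → R} {x : ι × κ → R} (hv : ∀ i, 0 ≤ v i) (hx : ∀ p, 0 ≤ x p) (i : ι) :
    ∃ a, 0 ≤ a ∧ a ≤ ∑ j, v i * x (i, j) ∧ (1 ≤ ∑ j, x (i, j) → v i ≤ a) := by
  rw [← Finset.mul_sum]
  by_cases hi : 1 ≤ ∑ j, x (i, j)
  · exact ⟨v i, hv i, le_mul_of_one_le_right (hv i) hi, fun _ => le_rfl⟩
  · exact ⟨0, le_rfl, mul_nonneg (hv i) (Finset.sum_nonneg fun j _ => hx _), fun h => absurd h hi⟩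

variable [Fintype ι]

/-- The load that `x` puts on the machine of the pair `p` through `p` itself and the pairs that
precede it in the order `r`. -/
noncomputable def prefixLoad (r : ι × κ → ι × κ → Prop) (s x : ι × κ → 𝕜) (p : ι × κ) : 𝕜 :=
  ∑ i, s (i, p.2) * {q | q = p ∨ r q p}.indicator x (i, p.2)

theorem density_mul_prefixLoad_le (hv : ∀ i, 0 ≤ v i) (hs : ∀ p, 0 < s p) (hx : ∀ p, 0 ≤ x p)
    (hr : ∀ p q, r p q → v q.1 / s q ≤ v p.1 / s p) (p : ι × κ) :
    v p.1 / s p * prefixLoad r s x p ≤ ∑ i, v i * x (i, p.2) := by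
  rw [prefixLoad, Finset.mul_sum]
  refine Finset.sum_le_sum fun i _ => ?_
  by_cases hi : (i, p.2) ∈ {q | q = p ∨ r q p}
  · have hdensity : v p.1 / s p ≤ v i / s (i, p.2) := by
      rcases hi with h | h
      · rw [← h]
      · exact hr _ _ h
    rw [Set.indicator_of_mem hi, ← mul_assoc]
    exact mul_le_mul_of_nonneg_right ((le_div_iff₀ (hs _)).1 hdensity) (hx _)
  · rw [Set.indicator_of_notMem hi, mul_zero, mul_zero]
    exact mul_nonneg (hv i) (hx _)

theorem exists_machine_price (hv : ∀ i, 0 ≤ v i) (hs : ∀ p, 0 < s p) (hx : ∀ p, 0 ≤ x p)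
    (hr : ∀ p q, r p q → v q.1 / s q ≤ v p.1 / s p) (c : κ → 𝕜) (j : κ) :
    ∃ b, 0 ≤ b ∧ b * c j ≤ ∑ i, v i * x (i, j) ∧
      ∀ i, c j ≤ prefixLoad r s x (i, j) → v i ≤ b * s (i, j) := by
  let blocked : Finset ι := {i | c j ≤ prefixLoad r s x (i, j)}
  rcases blocked.eq_empty_or_nonempty with hempty | hne
  · refine ⟨0, le_rfl, ?_, fun i hi => ?_⟩
    · rw [zero_mul]
      exact Finset.sum_nonneg fun i _ => mul_nonneg (hv i) (hx _)
    · exact absurd hi (Finset.filter_eq_empty_iff.1 hempty (Finset.mem_univ i))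
  · obtain ⟨i₀, hi₀, hmax⟩ := blocked.exists_max_image (fun i => v i / s (i, j)) hne
    have hdensity : 0 ≤ v i₀ / s (i₀, j) := div_nonneg (hv i₀) (hs _).le
    refine ⟨v i₀ / s (i₀, j), hdensity, ?_, fun i hi => ?_⟩
    · have hfull : c j ≤ prefixLoad r s x (i₀, j) := by simpa [blocked] using hi₀
      exact (mul_le_mul_of_nonneg_left hfull hdensity).trans
        (density_mul_prefixLoad_le hv hs hx hr (i₀, j))
    · exact (div_le_iff₀ (hs _)).1 (hmax i (by simpa [blocked] using hi))

variable [Fintype κ]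

theorem IsLexMaximalAssignment.job_or_machine_saturated [Std.Irrefl r] (hs : ∀ p, 0 < s p)
    (hx : IsLexMaximalAssignment r s c E x) {p : ι × κ} (hp : p ∈ E) :
    1 ≤ ∑ j, x (p.1, j) ∨ c p.2 ≤ prefixLoad r s x p := by
  classical
  by_contra! ⟨hjob, hmachine⟩
  obtain ⟨δ, hδ, hδlt⟩ : ∃ δ, 0 < δ ∧
      δ < min (1 - ∑ j, x (p.1, j)) ((c p.2 - prefixLoad r s x p) / s p) :=
    exists_between (lt_min (sub_pos.2 hjob) (div_pos (sub_pos.2 hmachine) (hs p)))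
  obtain ⟨hδjob, hδmachine⟩ := lt_min_iff.1 hδlt
  rw [lt_div_iff₀' (hs p)] at hδmachine
  let A : Set (ι × κ) := {q | q = p ∨ r q p}
  have hjob_trunc : ∑ j, A.indicator x (p.1, j) ≤ ∑ j, x (p.1, j) :=
    Finset.sum_le_sum fun j _ => Set.indicator_le_self' (fun q _ => hx.nonneg q) _
  have hmachine_trunc : ∑ i, s (i, p.2) * A.indicator x (i, p.2) = prefixLoad r s x p := rfl
  have hfeasible : IsFractionalAssignment s c E (A.indicator x + Pi.single p δ) :=
    (hx.toIsFractionalAssignment.indicator (fun q => (hs q).le) A).add_single hp hδ.le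
      (by linarith) (by linarith)
  refine hx.not_lex _ hfeasible ⟨p, fun q hq => ?_, ?_⟩
  · have hqp : q ≠ p := ne_of_irrefl hq
    simp [A, hq, hqp]
  · simpa [A] using hδ

theorem stmt9_general [Std.Irrefl r] (hv : ∀ i, 0 ≤ v i) (hs : ∀ p, 0 < s p)
    (hr : ∀ p q, r p q → v q.1 / s q ≤ v p.1 / s p) (hx : IsLexMaximalAssignment r s c E x)
    (hy : IsFractionalAssignment s c E y) :
    ∑ p, v p.1 * y p ≤ 2 * ∑ p, v p.1 * x p := by
  choose a ha_nonneg ha_le ha using exists_job_price hv hx.nonneg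
  choose b hb_nonneg hb_le hb using exists_machine_price hv hs hx.nonneg hr c
  have hdual (p : ι × κ) (hp : p ∈ E) : v p.1 ≤ a p.1 + b p.2 * s p := by
    rcases hx.job_or_machine_saturated hs hp with h | h
    · exact le_add_of_le_of_nonneg (ha _ h) (mul_nonneg (hb_nonneg _) (hs p).le)
    · exact le_add_of_nonneg_of_le (ha_nonneg _) (hb _ _ h)
  calc ∑ p, v p.1 * y p
      ≤ ∑ i, a i + ∑ j, b j * c j := hy.sum_mul_le_of_dual_feasible ha_nonneg hb_nonneg hdual
    _ ≤ ∑ i, ∑ j, v i * x (i, j) + ∑ j, ∑ i, v i * x (i, j) :=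
        add_le_add (Finset.sum_le_sum fun i _ => ha_le i) (Finset.sum_le_sum fun j _ => hb_le j)
    _ = 2 * ∑ p, v p.1 * x p := by
        rw [two_mul, Fintype.sum_prod_type, Finset.sum_comm (s := .univ (α := κ))]

end Greedy

namespace VIGAPLPFeasible

variable {n m : ℕ} {s x : Fin n × Fin m → ℝ} {c : Fin m → ℝ} {E : Finset (Fin n × Fin m)}

theorem iff_isFractionalAssignment :
    VIGAPLPFeasible s c E x ↔ IsFractionalAssignment s c (E : Set (Fin n × Fin m)) x := by
  refine ⟨fun ⟨h01, hE, hjob, hmachine⟩ => ⟨fun p => (h01 p).1, hE, hjob, hmachine⟩,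
    fun hx => ⟨fun p => ⟨hx.nonneg p, ?_⟩, hx.eq_zero_of_notMem, hx.job_le, hx.machine_le⟩⟩
  exact (Finset.single_le_sum (f := fun j => x (p.1, j)) (fun j _ => hx.nonneg _)
    (Finset.mem_univ p.2)).trans (hx.job_le p.1)

theorem isLexMaximalAssignment {K : Type*} [LT K] {e : K ≃ Fin n × Fin m}
    (hx : VIGAPLPFeasible s c E x)
    (hlexmax : ∀ y, VIGAPLPFeasible s c E y → y ≠ x →
      ∀ k, (∀ l, l < k → x (e l) = y (e l)) → x (e k) ≠ y (e k) → y (e k) < x (e k)) :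
    IsLexMaximalAssignment (InvImage (· < ·) e.symm) s c (E : Set (Fin n × Fin m)) x where
  toIsFractionalAssignment := iff_isFractionalAssignment.1 hx
  not_lex := by
    rintro y hy ⟨p, heq, hlt⟩
    have hne : y ≠ x := fun h => hlt.ne' (congrFun h p)
    have hgt := hlexmax y (iff_isFractionalAssignment.2 hy) hne (e.symm p)
      (fun l hl => heq (e l) (by simpa [InvImage] using hl)) (by simpa using hlt.ne)
    exact hlt.not_gt (by simpa using hgt)

end VIGAPLPFeasible

/-- The greedy density-ordered (lexicographically maximal) fractional solution is a
2-approximation to the VIGAP[E] LP. -/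
theorem stmt9 (n m : ℕ) (v : Fin n → ℝ) (s : Fin n × Fin m → ℝ) (c : Fin m → ℝ)
    (hv : ∀ i, 0 ≤ v i) (hs : ∀ p, 0 < s p) (hc : ∀ j, 0 ≤ c j)
    (e : Fin (n * m) ≃ (Fin n × Fin m))
    (hdens : ∀ k l : Fin (n * m), k ≤ l → v (e l).1 / s (e l) ≤ v (e k).1 / s (e k))
    (E : Finset (Fin n × Fin m))
    (x : Fin n × Fin m → ℝ)
    (hx : VIGAPLPFeasible s c E x)
    (hlexmax : ∀ y, VIGAPLPFeasible s c E y → y ≠ x →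
      ∀ k : Fin (n * m), (∀ l, l < k → x (e l) = y (e l)) → x (e k) ≠ y (e k) →
        y (e k) < x (e k)) :
    ∀ y, VIGAPLPFeasible s c E y →
      ∑ p : Fin n × Fin m, v p.1 * y p ≤ 2 * ∑ p : Fin n × Fin m, v p.1 * x p := by
  have hr (p q : Fin n × Fin m) (h : e.symm p < e.symm q) : v q.1 / s q ≤ v p.1 / s p := by
    simpa using hdens _ _ h.le
  exact fun y hy => stmt9_general hv hs hr (hx.isLexMaximalAssignment hlexmax)
    (VIGAPLPFeasible.iff_isFractionalAssignment.1 hy)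
end

section
/- Let d be a positive integer and let P ⊆ (Fin d → ℝ) be a nonempty compact convex set contained in the nonnegative orthant and downward closed (if y ∈ P and 0 ≤ x ≤ y componentwise, then x ∈ P). Let α ≥ 1 be a real number such that P has integrality gap at most α: for every c : Fin d → ℝ, sup_{x ∈ P} ∑_k c(k)·x(k) ≤ α · sup_{z ∈ P ∩ ℤ^d} ∑_k c(k)·z(k), where P ∩ ℤ^d denotes the set of points of P all of whose coordinates are integers. Then for every x ∈ P, the point (1/α)·x lies in the convex hull of P ∩ ℤ^d. Equivalently, for every x ∈ P/α there exists a (finitely supported) probability distribution over integer points of P whose expectation equals x. -/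
/-!
A point of a locally convex space lies in the closed convex hull of `S` as soon as it satisfies
every linear inequality valid on `S`. If `f ≤ u` on the integer points of `P`, the integrality gap
gives `f ≤ α * u` on `P`, that is, `f ≤ u` on `α⁻¹ • P`. A bounded set has only finitely many
integer points, so the convex hull of these is already closed.
-/

section SupportFunction

variable {E : Type*} [AddCommGroup E] [Module ℝ E] [TopologicalSpace E] [IsTopologicalAddGroup E]
  [ContinuousSMul ℝ E] [LocallyConvexSpace ℝ E] {P S : Set E}

theorem mem_closedConvexHull_of_forall_dual_le {y : E}
    (h : ∀ (f : StrongDual ℝ E) (u : ℝ), (∀ z ∈ S, f z ≤ u) → f y ≤ u) :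
    y ∈ closedConvexHull ℝ S := by
  by_contra hy
  obtain ⟨f, u, hfu, huy⟩ :=
    geometric_hahn_banach_closed_point convex_closedConvexHull isClosed_closedConvexHull hy
  exact (h f u fun z hz ↦ (hfu z (subset_closedConvexHull hz)).le).not_gt huy

theorem inv_smul_mem_closedConvexHull_of_sSup_image_le {α : ℝ} (hS : S.Nonempty)
    (hP : ∀ f : StrongDual ℝ E, BddAbove (f '' P)) (hα : 0 < α)
    (hgap : ∀ f : StrongDual ℝ E, sSup (f '' P) ≤ α * sSup (f '' S)) {x : E} (hx : x ∈ P) :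
    α⁻¹ • x ∈ closedConvexHull ℝ S := by
  refine mem_closedConvexHull_of_forall_dual_le fun f u hu ↦ ?_
  have hSu : sSup (f '' S) ≤ u := csSup_le (hS.image f) (Set.forall_mem_image.2 hu)
  have hfx : f x ≤ α * u :=
    calc f x ≤ sSup (f '' P) := le_csSup (hP f) (Set.mem_image_of_mem f hx)
      _ ≤ α * sSup (f '' S) := hgap f
      _ ≤ α * u := by gcongr
  rwa [map_smul, smul_eq_mul, inv_mul_le_iff₀ hα]

end SupportFunction

section IntegerPoints

variable {ι : Type*} {P : Set (ι → ℝ)}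

/-- The integer points `P ∩ ℤ^ι` of a set `P` of real vectors, as vectors with real coordinates. -/
def integerPoints (P : Set (ι → ℝ)) : Set (ι → ℝ) :=
  {z ∈ P | ∀ k, ∃ q : ℤ, z k = (q : ℝ)}

theorem zero_mem_integerPoints (h : 0 ∈ P) : 0 ∈ integerPoints P :=
  ⟨h, fun _ ↦ ⟨0, Int.cast_zero.symm⟩⟩

theorem integerPoints_eq_inter_span [Finite ι] (P : Set (ι → ℝ)) :
    integerPoints P = P ∩ Submodule.span ℤ (Set.range (Pi.basisFun ℝ ι)) := by
  ext z
  simp [integerPoints, Module.Basis.mem_span_iff_repr_mem, eq_comm]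

theorem finite_integerPoints [Finite ι] (hP : Bornology.IsBounded P) :
    (integerPoints P).Finite := by
  cases nonempty_fintype ι
  rw [integerPoints_eq_inter_span]
  exact ZSpan.setFinite_inter _ hP

theorem stmt11_general [Fintype ι] (hP : Bornology.IsBounded P)
    (hne : (integerPoints P).Nonempty) {α : ℝ} (hα : 0 < α)
    (hgap : ∀ c : ι → ℝ,
      sSup ((fun x ↦ ∑ k, c k * x k) '' P) ≤
        α * sSup ((fun x ↦ ∑ k, c k * x k) '' integerPoints P)) :
    ∀ x ∈ P, α⁻¹ • x ∈ convexHull ℝ (integerPoints P) := by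
  classical
  intro x hx
  have hgap_dual (f : StrongDual ℝ (ι → ℝ)) :
      sSup (f '' P) ≤ α * sSup (f '' integerPoints P) := by
    obtain ⟨c, hc⟩ := (dotProductEquiv ℝ ι).surjective f.toLinearMap
    have hfc : (f : (ι → ℝ) → ℝ) = fun x ↦ ∑ k, c k * x k := congrArg DFunLike.coe hc.symm
    rw [hfc]
    exact hgap c
  have hbdd (f : StrongDual ℝ (ι → ℝ)) : BddAbove (f '' P) :=
    (f.lipschitz.isBounded_image hP).bddAbove
  have hclosed : IsClosed (convexHull ℝ (integerPoints P)) :=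
    (finite_integerPoints hP).isClosed_convexHull ℝ
  exact closedConvexHull_min (subset_convexHull ℝ _) (convex_convexHull ℝ _) hclosed
    (inv_smul_mem_closedConvexHull_of_sSup_image_le hne hbdd hα hgap_dual hx)

end IntegerPoints

/-- Lavi–Swamy containment lemma: if a packing polytope `P` has integrality gap
at most `α`, then the scaled-down polytope `P/α` is contained in the convex hull
of the integer points of `P`. -/
theorem stmt11 (d : ℕ) (hd : 0 < d) (P : Set (Fin d → ℝ))
    (hne : P.Nonempty) (hcomp : IsCompact P) (hconv : Convex ℝ P)
    (hpos : ∀ x ∈ P, ∀ k, 0 ≤ x k)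
    (hdc : ∀ y ∈ P, ∀ x : Fin d → ℝ, (∀ k, 0 ≤ x k) → (∀ k, x k ≤ y k) → x ∈ P)
    (α : ℝ) (hα : 1 ≤ α)
    (hgap : ∀ c : Fin d → ℝ,
      sSup ((fun x => ∑ k, c k * x k) '' P) ≤
        α * sSup ((fun x => ∑ k, c k * x k) '' {z ∈ P | ∀ k, ∃ q : ℤ, z k = (q : ℝ)})) :
    ∀ x ∈ P, α⁻¹ • x ∈ convexHull ℝ {z ∈ P | ∀ k, ∃ q : ℤ, z k = (q : ℝ)} := by
  obtain ⟨y, hy⟩ := hne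
  have hzero : 0 ∈ P := hdc y hy 0 (fun _ ↦ le_rfl) (hpos y hy)
  exact stmt11_general hcomp.isBounded ⟨0, zero_mem_integerPoints hzero⟩ (one_pos.trans_le hα) hgap
end
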